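/- For every δ, ν ∈ ℝ with 0 < δ < 1 and ν > 0, there exists a constant Δ₀(δ,ν) such that for all Δ ≥ Δ₀(δ,ν): if G is a finite simple graph with maximum degree at most Δ and L is a list assignment of E(G) such that (i) |L(e)| ≥ ν·Δ for all e ∈ E(G), and (ii) the vector x = (1/|L(e)| : e ∈ E(G)) is an element of (1−δ)·MP(G), then G is L-edge-colourable. -/

import Mathlib

open scoped Pointwise

/-- An `L`-edge-colouring of a simple graph `G`. -/
def IsLEdgeColouring {V : Type} (G : SimpleGraph V) (L : Sym2 V → Finset ℕ)
    (γ : Sym2 V → ℕ) : Prop :=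
  (∀ e ∈ G.edgeSet, γ e ∈ L e) ∧
  ∀ e ∈ G.edgeSet, ∀ f ∈ G.edgeSet, e ≠ f → (∃ v, v ∈ e ∧ v ∈ f) → γ e ≠ γ f

/-- `M` is a matching of `G`: a set of edges of `G`, pairwise sharing no vertex. -/
def IsMatchingFinset {V : Type} [Fintype V] [DecidableEq V] (G : SimpleGraph V)
    [DecidableRel G.Adj] (M : Finset (Sym2 V)) : Prop :=
  M ⊆ G.edgeFinset ∧ ∀ e ∈ M, ∀ f ∈ M, e ≠ f → ∀ v : V, ¬(v ∈ e ∧ v ∈ f)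

/-- The matching polytope of `G`: the convex hull in `ℝ^{E(G)}` of the characteristic
vectors of the matchings of `G`. -/
noncomputable def matchingPolytope {V : Type} [Fintype V] [DecidableEq V]
    (G : SimpleGraph V) [DecidableRel G.Adj] : Set (G.edgeFinset → ℝ) :=
  convexHull ℝ {x | ∃ M : Finset (Sym2 V), IsMatchingFinset G M ∧
    x = fun e : G.edgeFinset => if (e : Sym2 V) ∈ M then (1 : ℝ) else 0}

set_option linter.unusedSectionVars false

namespace Nib

section framework
variable {ι A : Type} [Fintype ι] [DecidableEq ι] [Fintype A]

/-- product weight -/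
def Wt (μ : ι → A → ℝ) (ω : ι → A) : ℝ := ∏ i, μ i (ω i)

/-- expectation w.r.t. the product weight -/
def Ex (μ : ι → A → ℝ) (f : (ι → A) → ℝ) : ℝ := ∑ ω, Wt μ ω * f ω

/-- averaging of one coordinate -/
def Av (μ : ι → A → ℝ) (i : ι) (f : (ι → A) → ℝ) (ω : ι → A) : ℝ :=
  ∑ a, μ i a * f (Function.update ω i a)

/-- every factor is a probability weight -/
structure IsProb (μ : ι → A → ℝ) : Prop where
  nonneg : ∀ i a, 0 ≤ μ i a
  sum_one : ∀ i, ∑ a, μ i a = 1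

/-- `f` depends only on the coordinates in `S` -/
def Dep {β : Type} (S : Finset ι) (f : (ι → A) → β) : Prop :=
  ∀ ω ω' : ι → A, (∀ i ∈ S, ω i = ω' i) → f ω = f ω'

variable {μ : ι → A → ℝ}

lemma Wt_nonneg (h : IsProb μ) (ω : ι → A) : 0 ≤ Wt μ ω :=
  Finset.prod_nonneg fun i _ => h.nonneg i _

lemma Wt_swap (i : ι) (ω : ι → A) (a : A) :
    Wt μ (Function.update ω i a) * μ i (ω i) = Wt μ ω * μ i a := by
  unfold Wt
  rw [← Finset.mul_prod_erase Finset.univ _ (Finset.mem_univ i),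
    ← Finset.mul_prod_erase Finset.univ (fun j => μ j (ω j)) (Finset.mem_univ i)]
  have : ∏ x ∈ Finset.univ.erase i, μ x (Function.update ω i a x)
      = ∏ x ∈ Finset.univ.erase i, μ x (ω x) := by
    apply Finset.prod_congr rfl
    intro x hx
    rw [Function.update_of_ne (Finset.ne_of_mem_erase hx)]
  rw [this, Function.update_self]
  ring

lemma Ex_Av (h : IsProb μ) (i : ι) (f : (ι → A) → ℝ) : Ex μ (Av μ i f) = Ex μ f := by
  have h1 : Ex μ (Av μ i f)
      = ∑ x : (ι → A) × A, Wt μ x.1 * μ i x.2 * f (Function.update x.1 i x.2) := by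
    rw [Fintype.sum_prod_type]
    unfold Ex Av
    refine Finset.sum_congr rfl fun ω _ => ?_
    rw [Finset.mul_sum]
    exact Finset.sum_congr rfl fun a _ => by ring
  have h2 : Ex μ f = ∑ x : (ι → A) × A, Wt μ x.1 * μ i x.2 * f x.1 := by
    rw [Fintype.sum_prod_type]
    unfold Ex
    refine Finset.sum_congr rfl fun ω _ => ?_
    dsimp only
    rw [← Finset.sum_mul, ← Finset.mul_sum, h.sum_one, mul_one]
  rw [h1, h2]
  refine Finset.sum_bij' (fun x _ => (Function.update x.1 i x.2, x.1 i))
    (fun x _ => (Function.update x.1 i x.2, x.1 i)) (by simp) (by simp) (by simp) (by simp) ?_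
  intro x _
  simp only
  rw [Wt_swap]

lemma Ex_const (h : IsProb μ) (c : ℝ) : Ex μ (fun _ => c) = c := by
  unfold Ex Wt
  rw [← Finset.sum_mul, ← Fintype.piFinset_univ, ← Finset.prod_univ_sum]
  simp [h.sum_one]

lemma Ex_add (f g : (ι → A) → ℝ) : Ex μ (fun ω => f ω + g ω) = Ex μ f + Ex μ g := by
  simp [Ex, mul_add, Finset.sum_add_distrib]

lemma Ex_sub (f g : (ι → A) → ℝ) : Ex μ (fun ω => f ω - g ω) = Ex μ f - Ex μ g := by
  simp [Ex, mul_sub, Finset.sum_sub_distrib]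

lemma Ex_cmul (c : ℝ) (f : (ι → A) → ℝ) : Ex μ (fun ω => c * f ω) = c * Ex μ f := by
  simp only [Ex, Finset.mul_sum]
  exact Finset.sum_congr rfl fun a _ => by ring

lemma Ex_mulc (c : ℝ) (f : (ι → A) → ℝ) : Ex μ (fun ω => f ω * c) = Ex μ f * c := by
  simp only [Ex, Finset.sum_mul]
  exact Finset.sum_congr rfl fun a _ => by ring

lemma Ex_sum {κ : Type} (s : Finset κ) (f : κ → (ι → A) → ℝ) :
    Ex μ (fun ω => ∑ k ∈ s, f k ω) = ∑ k ∈ s, Ex μ (f k) := by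
  simp only [Ex, Finset.mul_sum]
  exact Finset.sum_comm

lemma Ex_mono (h : IsProb μ) {f g : (ι → A) → ℝ} (hfg : ∀ ω, f ω ≤ g ω) : Ex μ f ≤ Ex μ g :=
  Finset.sum_le_sum fun ω _ => mul_le_mul_of_nonneg_left (hfg ω) (Wt_nonneg h ω)

lemma Ex_nonneg (h : IsProb μ) {f : (ι → A) → ℝ} (hf : ∀ ω, 0 ≤ f ω) : 0 ≤ Ex μ f :=
  Finset.sum_nonneg fun ω _ => mul_nonneg (Wt_nonneg h ω) (hf ω)

lemma Av_dep {i : ι} {S : Finset ι} {f : (ι → A) → ℝ} (hf : Dep (insert i S) f) :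
    Dep S (Av μ i f) := by
  intro ω ω' hω
  unfold Av
  refine Finset.sum_congr rfl fun a _ => ?_
  congr 1
  apply hf
  intro j hj
  by_cases hji : j = i
  · subst hji; simp
  · rw [Function.update_of_ne hji, Function.update_of_ne hji]
    exact hω j (Finset.mem_of_mem_insert_of_ne hj hji)

lemma Ex_indep (h : IsProb μ) {S T : Finset ι} {f g : (ι → A) → ℝ} (hf : Dep S f) (hg : Dep T g)
    (hST : Disjoint S T) : Ex μ (fun ω => f ω * g ω) = Ex μ f * Ex μ g := by
  induction S using Finset.induction_on generalizing f with
  | empty =>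
    rcases isEmpty_or_nonempty (ι → A) with hE | ⟨⟨ω0⟩⟩
    · simp [Ex]
    · have : f = fun _ => f ω0 := by
        funext ω; exact hf _ _ (by simp)
      rw [this, Ex_const h, Ex_cmul]
  | insert i S hi ih =>
    have hiT : i ∉ T := by
      intro hiT
      exact (Finset.disjoint_left.mp hST (Finset.mem_insert_self i S)) hiT
    have hST' : Disjoint S T := Finset.disjoint_of_subset_left (Finset.subset_insert _ _) hST
    rw [← Ex_Av h i, ← Ex_Av h i f, ← ih (Av_dep hf) hST']
    congr 1
    funext ω
    unfold Av
    rw [Finset.sum_mul]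
    refine Finset.sum_congr rfl fun a _ => ?_
    have : g (Function.update ω i a) = g ω := by
      apply hg
      intro j hj
      rw [Function.update_of_ne]
      rintro rfl; exact hiT hj
    dsimp only
    rw [this]; ring

lemma Dep.mono {β : Type} {S T : Finset ι} {f : (ι → A) → β} (hf : Dep S f) (hST : S ⊆ T) :
    Dep T f := fun ω ω' hω => hf ω ω' fun i hi => hω i (hST hi)

lemma Dep.comp {β γ : Type} {S : Finset ι} {f : (ι → A) → β} (hf : Dep S f) (g : β → γ) :
    Dep S (fun ω => g (f ω)) := fun ω ω' hω => congrArg g (hf ω ω' hω)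

lemma Dep.comp2 {β γ η : Type} {S : Finset ι} {f : (ι → A) → β} {f' : (ι → A) → γ}
    (hf : Dep S f) (hf' : Dep S f') (g : β → γ → η) :
    Dep S (fun ω => g (f ω) (f' ω)) := fun ω ω' hω => by
  simp only
  rw [hf ω ω' hω, hf' ω ω' hω]

lemma Dep.prod {κ : Type} {S : Finset ι} (s : Finset κ) {f : κ → (ι → A) → ℝ}
    (hf : ∀ k ∈ s, Dep S (f k)) :
    Dep S (fun ω => ∏ k ∈ s, f k ω) := fun ω ω' hω => 
  Finset.prod_congr rfl fun k hk => hf k hk ω ω' hω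

lemma Dep.sum {κ : Type} {S : Finset ι} (s : Finset κ) {f : κ → (ι → A) → ℝ}
    (hf : ∀ k ∈ s, Dep S (f k)) :
    Dep S (fun ω => ∑ k ∈ s, f k ω) := fun ω ω' hω => 
  Finset.sum_congr rfl fun k hk => hf k hk ω ω' hω

/-- independence of a family of functions with disjoint supports -/
lemma Ex_prod_indep (h : IsProb μ) {κ : Type} [DecidableEq κ] (s : Finset κ)
    (T : κ → Finset ι) (f : κ → (ι → A) → ℝ) (hf : ∀ k ∈ s, Dep (T k) (f k))
    (hT : ∀ k ∈ s, ∀ l ∈ s, k ≠ l → Disjoint (T k) (T l)) :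
    Ex μ (fun ω => ∏ k ∈ s, f k ω) = ∏ k ∈ s, Ex μ (f k) := by
  induction s using Finset.induction_on with
  | empty => simp [Ex_const h]
  | insert k s hk ih =>
    have h1 : ∀ l ∈ s, Dep (s.biUnion T) (f l) := fun l hl =>
      (hf l (Finset.mem_insert_of_mem hl)).mono (Finset.subset_biUnion_of_mem T hl)
    have h2 : Disjoint (T k) (s.biUnion T) := by
      rw [Finset.disjoint_biUnion_right]
      intro l hl
      exact hT k (Finset.mem_insert_self _ _) l (Finset.mem_insert_of_mem hl)
        (by rintro rfl; exact hk hl)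
    simp only [Finset.prod_insert hk]
    rw [Ex_indep h (hf k (Finset.mem_insert_self _ _)) (Dep.prod s h1) h2]
    rw [ih (fun l hl => hf l (Finset.mem_insert_of_mem hl))
      (fun a ha b hb => hT a (Finset.mem_insert_of_mem ha) b (Finset.mem_insert_of_mem hb))]

/-- indicator -/
noncomputable def ind (P : Prop) : ℝ := open Classical in if P then 1 else 0

lemma ind_nonneg (P : Prop) : 0 ≤ ind P := by unfold ind; split_ifs <;> norm_num
lemma ind_le_one (P : Prop) : ind P ≤ 1 := by unfold ind; split_ifs <;> norm_num
lemma ind_true {P : Prop} (h : P) : ind P = 1 := by unfold ind; simp [h]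
lemma ind_false {P : Prop} (h : ¬ P) : ind P = 0 := by unfold ind; simp [h]
lemma ind_mono {P Q : Prop} (h : P → Q) : ind P ≤ ind Q := by
  by_cases hP : P
  · rw [ind_true hP, ind_true (h hP)]
  · rw [ind_false hP]; exact ind_nonneg _
lemma ind_and (P Q : Prop) : ind (P ∧ Q) = ind P * ind Q := by
  by_cases hP : P <;> by_cases hQ : Q <;> simp [ind, hP, hQ]
lemma ind_or_le (P Q : Prop) : ind (P ∨ Q) ≤ ind P + ind Q := by
  by_cases hP : P <;> by_cases hQ : Q <;> simp [ind, hP, hQ]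
lemma ind_not (P : Prop) : ind (¬ P) = 1 - ind P := by
  by_cases hP : P <;> simp [ind, hP]
lemma ind_all {κ : Type} (s : Finset κ) (P : κ → Prop) :
    ind (∀ k ∈ s, P k) = ∏ k ∈ s, ind (P k) := by
  by_cases h : ∀ k ∈ s, P k
  · rw [ind_true h]
    exact (Finset.prod_eq_one fun k hk => ind_true (h k hk)).symm
  · rw [ind_false h]
    push Not at h
    obtain ⟨k, hk, hP⟩ := h
    exact (Finset.prod_eq_zero hk (ind_false hP)).symm
lemma ind_ex_le {κ : Type} (s : Finset κ) (P : κ → Prop) :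
    ind (∃ k ∈ s, P k) ≤ ∑ k ∈ s, ind (P k) := by
  by_cases h : ∃ k ∈ s, P k
  · obtain ⟨k, hk, hP⟩ := h
    rw [ind_true ⟨k, hk, hP⟩, ← ind_true hP]
    exact Finset.single_le_sum (f := fun k => ind (P k)) (fun k _ => ind_nonneg _) hk
  · rw [ind_false h]
    exact Finset.sum_nonneg fun k _ => ind_nonneg _

/-- Local lemma -/
theorem lll (h : IsProb μ) {J : Type} [Fintype J] [DecidableEq J] (E : J → (ι → A) → Prop)
    (S : J → Finset ι) (hE : ∀ j, Dep (S j) (E j))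
    (hp : ∀ j, ∑ k with ¬ Disjoint (S j) (S k), Ex μ (fun ω => ind (E k ω)) ≤ 1/4)
    (hp1 : ∀ j, Ex μ (fun ω => ind (E j ω)) ≤ 1/4) :
    ∃ ω, Wt μ ω ≠ 0 ∧ ∀ j, ¬ E j ω := by
  classical
  set P : J → ℝ := fun j => Ex μ (fun ω => ind (E j ω)) with hP
  set Bd : Finset J → (ι → A) → Prop := fun s ω => ∀ j ∈ s, ¬ E j ω with hBd
  have hP0 : ∀ j, 0 ≤ P j := fun j => Ex_nonneg h fun ω => ind_nonneg _
  have hB0 : ∀ s, 0 ≤ Ex μ (fun ω => ind (Bd s ω)) := fun s => Ex_nonneg h fun ω => ind_nonneg _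
  have key : ∀ n : ℕ, ∀ s : Finset J, s.card = n → ∀ j,
      Ex μ (fun ω => ind (E j ω ∧ Bd s ω)) ≤ 2 * P j * Ex μ (fun ω => ind (Bd s ω)) := by
    intro n
    induction n using Nat.strong_induction_on with
    | _ n ih =>
      intro s hs j
      set s1 := s.filter (fun k => ¬ Disjoint (S j) (S k)) with hs1
      set s2 := s.filter (fun k => Disjoint (S j) (S k)) with hs2
      have hle : Ex μ (fun ω => ind (E j ω ∧ Bd s ω)) ≤ P j * Ex μ (fun ω => ind (Bd s2 ω)) := by
        have : Ex μ (fun ω => ind (E j ω) * ind (Bd s2 ω)) = P j * Ex μ (fun ω => ind (Bd s2 ω)) := by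
          apply Ex_indep h (S := S j) (T := s2.biUnion S)
          · exact (hE j).comp ind
          · intro ω ω' hω
            simp only
            congr 1
            simp only [hBd, eq_iff_iff]
            refine forall₂_congr fun k hk => ?_
            rw [hE k ω ω' fun i hi => hω i (Finset.mem_biUnion.mpr ⟨k, hk, hi⟩)]
          · rw [Finset.disjoint_biUnion_right]
            intro k hk
            exact (Finset.mem_filter.mp hk).2
        rw [← this]
        apply Ex_mono h
        intro ω
        rw [← ind_and]
        apply ind_mono
        rintro ⟨h1, h2⟩
        exact ⟨h1, fun k hk => h2 k (Finset.mem_filter.mp hk).1⟩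
      have hhalf : Ex μ (fun ω => ind (Bd s2 ω)) ≤ 2 * Ex μ (fun ω => ind (Bd s ω)) := by
        by_cases he : s1 = ∅
        · have : s2 = s := by
            rw [hs2, Finset.filter_eq_self]
            intro k hk
            by_contra hc
            have : k ∈ s1 := Finset.mem_filter.mpr ⟨hk, hc⟩
            rw [he] at this
            simp at this
          rw [this]
          linarith [hB0 s]
        · have hcard : s2.card < n := by
            rw [← hs]
            apply Finset.card_lt_card
            refine ⟨Finset.filter_subset _ _, ?_⟩
            intro hsub
            obtain ⟨k, hk⟩ := Finset.nonempty_iff_ne_empty.mpr he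
            have h1 := Finset.mem_filter.mp hk
            have h2 := (Finset.mem_filter.mp (hsub h1.1)).2
            exact h1.2 h2
          have h1 : Ex μ (fun ω => ind (Bd s2 ω)) ≤ Ex μ (fun ω => ind (Bd s ω))
              + ∑ k ∈ s1, Ex μ (fun ω => ind (E k ω ∧ Bd s2 ω)) := by
            rw [← Ex_sum, ← Ex_add]
            apply Ex_mono h
            intro ω
            by_cases hb : Bd s ω
            · rw [ind_true hb]
              have : 0 ≤ ∑ k ∈ s1, ind (E k ω ∧ Bd s2 ω) := 
                Finset.sum_nonneg fun k _ => ind_nonneg _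
              linarith [ind_le_one (Bd s2 ω)]
            · by_cases hb2 : Bd s2 ω
              · have : ∃ k ∈ s1, E k ω ∧ Bd s2 ω := by
                  by_contra hc
                  push Not at hc
                  apply hb
                  intro k hk
                  by_cases hd : Disjoint (S j) (S k)
                  · exact hb2 k (Finset.mem_filter.mpr ⟨hk, hd⟩)
                  · intro hek
                    exact hc k (Finset.mem_filter.mpr ⟨hk, hd⟩) hek hb2
                have h3 := ind_ex_le s1 (fun k => E k ω ∧ Bd s2 ω)
                rw [ind_true this] at h3
                linarith [ind_le_one (Bd s2 ω), ind_nonneg (Bd s ω)]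
              · rw [ind_false hb2]
                exact add_nonneg (ind_nonneg _) (Finset.sum_nonneg fun k _ => ind_nonneg _)
          have h2 : ∑ k ∈ s1, Ex μ (fun ω => ind (E k ω ∧ Bd s2 ω))
              ≤ (∑ k ∈ s1, P k) * (2 * Ex μ (fun ω => ind (Bd s2 ω))) := by
            rw [Finset.sum_mul]
            refine Finset.sum_le_sum fun k _ => ?_
            have := ih _ hcard s2 rfl k
            linarith
          have h3 : ∑ k ∈ s1, P k ≤ 1/4 := by
            refine le_trans (Finset.sum_le_sum_of_subset_of_nonneg ?_ fun k _ _ => hP0 k) (hp j)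
            intro k hk
            exact Finset.mem_filter.mpr ⟨Finset.mem_univ _, (Finset.mem_filter.mp hk).2⟩
          have h4 := mul_le_mul_of_nonneg_right h3 
            (mul_nonneg (by norm_num : (0:ℝ) ≤ 2) (hB0 s2))
          linarith
      have := mul_le_mul_of_nonneg_left hhalf (hP0 j)
      linarith
  have pos : ∀ s : Finset J, 0 < Ex μ (fun ω => ind (Bd s ω)) := by
    intro s
    induction s using Finset.induction_on with
    | empty => 
      have : (fun ω : ι → A => ind (Bd ∅ ω)) = fun _ => 1 := by
        funext ω; exact ind_true (by simp [hBd])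
      rw [this, Ex_const h]; norm_num
    | insert k s hk ih =>
      have h1 : Ex μ (fun ω => ind (Bd s ω)) ≤ 
        Ex μ (fun ω => ind (Bd (insert k s) ω)) + Ex μ (fun ω => ind (E k ω ∧ Bd s ω)) := by
        rw [← Ex_add]
        apply Ex_mono h
        intro ω
        refine le_trans (ind_mono ?_) (ind_or_le _ _)
        intro hb
        by_cases he : E k ω
        · exact Or.inr ⟨he, hb⟩
        · left
          intro j hj
          rcases Finset.mem_insert.mp hj with rfl | hj
          · exact he
          · exact hb j hj
      have h2 := key _ s rfl k
      have h3 := mul_le_mul_of_nonneg_right (hp1 k) (hB0 s)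
      nlinarith
  have := pos Finset.univ
  by_contra hc
  push Not at hc
  have hz : Ex μ (fun ω => ind (Bd Finset.univ ω)) = 0 := by
    unfold Ex
    apply Finset.sum_eq_zero
    intro ω _
    by_cases hw : Wt μ ω = 0
    · rw [hw, zero_mul]
    · obtain ⟨j, hj⟩ := hc ω hw
      have hb : ¬ Bd Finset.univ ω := fun hb => hb j (Finset.mem_univ _) hj
      dsimp only
      rw [ind_false hb, mul_zero]
  linarith

end framework
end Nib

namespace Nib
section bern
variable {ι : Type} [Fintype ι] [DecidableEq ι]

/-- Bernoulli weights -/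
def ber (p : ι → ℝ) (i : ι) (b : Bool) : ℝ := if b then p i else 1 - p i

lemma ber_prob {p : ι → ℝ} (h0 : ∀ i, 0 ≤ p i) (h1 : ∀ i, p i ≤ 1) : IsProb (ber p) where
  nonneg i a := by
    unfold ber; split_ifs
    · exact h0 i
    · linarith [h1 i]
  sum_one i := by simp [ber]

variable {p : ι → ℝ}

lemma Ex_single_false (h : IsProb (ber p)) (i : ι) :
    Ex (ber p) (fun ω => ind (ω i = false)) = 1 - p i := by
  rw [← Ex_Av h i, ← Ex_const h (1 - p i)]
  congr 1
  funext ω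
  simp [Av, ber, ind]

lemma Ex_single_true (h : IsProb (ber p)) (i : ι) :
    Ex (ber p) (fun ω => ind (ω i = true)) = p i := by
  rw [← Ex_Av h i, ← Ex_const h (p i)]
  congr 1
  funext ω
  simp [Av, ber, ind]

lemma Ex_all_false (h : IsProb (ber p)) (S : Finset ι) :
    Ex (ber p) (fun ω => ind (∀ i ∈ S, ω i = false)) = ∏ i ∈ S, (1 - p i) := by
  have : (fun ω : ι → Bool => ind (∀ i ∈ S, ω i = false))
      = fun ω => ∏ i ∈ S, ind (ω i = false) := by
    funext ω; exact ind_all S _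
  rw [this, Ex_prod_indep h S (fun i => {i})]
  · exact Finset.prod_congr rfl fun i _ => Ex_single_false h i
  · intro k _ ω ω' hω
    simp only
    rw [hω k (by simp)]
  · intro k _ l _ hkl
    simpa using hkl

lemma Ex_true_all_false (h : IsProb (ber p)) (j : ι) (S : Finset ι) (hj : j ∉ S) :
    Ex (ber p) (fun ω => ind (ω j = true ∧ ∀ i ∈ S, ω i = false)) = p j * ∏ i ∈ S, (1 - p i) := by
  simp only [ind_and]
  rw [Ex_indep h (S := {j}) (T := S), Ex_all_false h, Ex_single_true h]
  · intro ω ω' hω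
    simp only
    rw [hω j (by simp)]
  · intro ω ω' hω
    simp only
    congr 1
    simp only [eq_iff_iff]
    exact forall₂_congr fun i hi => by rw [hω i hi]
  · simpa using hj

lemma exp_le_quad {d : ℝ} (hd : |d| ≤ 1) : Real.exp d ≤ 1 + d + d ^ 2 := by
  have := Real.abs_exp_sub_one_sub_id_le hd
  have := (abs_le.mp this).2
  linarith

lemma two_point {q x y c l : ℝ} (hq0 : 0 ≤ q) (hc : |y - x| ≤ c) (hl : |l| * c ≤ 1) :
    (1 - q) * Real.exp (l * x) + q * Real.exp (l * y)
      ≤ Real.exp (l * ((1 - q) * x + q * y) + l ^ 2 * (q * c ^ 2)) := by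
  set d := l * (y - x) with hd
  have hd1 : |d| ≤ |l| * c := by
    rw [hd, abs_mul]; exact mul_le_mul_of_nonneg_left hc (abs_nonneg _)
  have hd2 : d ^ 2 ≤ l ^ 2 * c ^ 2 := by
    rw [← sq_abs d, ← sq_abs l, ← mul_pow]
    exact pow_le_pow_left₀ (abs_nonneg _) hd1 2
  have h1 := exp_le_quad (le_trans hd1 hl)
  have h2 : Real.exp (l * y) = Real.exp (l * x) * Real.exp d := by
    rw [← Real.exp_add]; congr 1; rw [hd]; ring
  have h3 : l * ((1 - q) * x + q * y) + l ^ 2 * (q * c ^ 2)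
    = l * x + (q * d + q * (l ^ 2 * c ^ 2)) := by rw [hd]; ring
  rw [h2, h3, Real.exp_add]
  have h4 : 1 + q * (d + d ^ 2) ≤ Real.exp (q * d + q * (l ^ 2 * c ^ 2)) := by
    have := Real.add_one_le_exp (q * d + q * (l ^ 2 * c ^ 2))
    nlinarith [mul_le_mul_of_nonneg_left hd2 hq0]
  have h5 := mul_le_mul_of_nonneg_left h1 hq0
  have h6 := mul_le_mul_of_nonneg_left (le_trans (by linarith : 1 - q + q * Real.exp d ≤ _) h4)
    (Real.exp_pos (l * x)).le
  linarith

theorem bernstein (h : IsProb (ber p)) (hp0 : ∀ i, 0 ≤ p i) (hp1 : ∀ i, p i ≤ 1)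
    (c : ι → ℝ) (l : ℝ) (hl : ∀ i, |l| * c i ≤ 1)
    (S : Finset ι) (f : (ι → Bool) → ℝ) (hf : Dep S f)
    (hc : ∀ i ω b b', |f (Function.update ω i b) - f (Function.update ω i b')| ≤ c i) :
    Ex (ber p) (fun ω => Real.exp (l * f ω))
      ≤ Real.exp (l * Ex (ber p) f + l ^ 2 * ∑ i ∈ S, p i * c i ^ 2) := by
  induction S using Finset.induction_on generalizing f with
  | empty =>
    have hcst : f = fun _ => f (fun _ => false) := by
      funext ω; exact hf _ _ (by simp)
    rw [hcst, Ex_const h, Ex_const h]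
    simp
  | insert i S hi ih =>
    have hav : ∀ ω, Av (ber p) i f ω = (1 - p i) * f (Function.update ω i false)
        + p i * f (Function.update ω i true) := by
      intro ω; simp [Av, ber]; ring
    have h1 := ih (Av (ber p) i f) (Av_dep hf) (by
      intro j ω b b'
      rw [hav, hav]
      by_cases hji : j = i
      · subst hji
        simp only [Function.update_idem]
        have := hc j ω b b
        rw [sub_self, abs_zero] at this
        simpa using this
      · have hcm : ∀ b t, Function.update (Function.update ω j b) i t
          = Function.update (Function.update ω i t) j b := 
          fun b t => Function.update_comm hji b t ω
        simp only [hcm]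
        have e1 := hc j (Function.update ω i false) b b'
        have e2 := hc j (Function.update ω i true) b b'
        rw [abs_le] at e1 e2 ⊢
        have := hp0 i
        have := hp1 i
        constructor <;> nlinarith)
    rw [Ex_Av h] at h1
    rw [← Ex_Av h i]
    have h2 : Ex (ber p) (Av (ber p) i fun ω => Real.exp (l * f ω))
        ≤ Ex (ber p) (fun ω => Real.exp (l * Av (ber p) i f ω) *
            Real.exp (l ^ 2 * (p i * c i ^ 2))) := by
      apply Ex_mono h
      intro ω
      rw [← Real.exp_add, hav]
      have : Av (ber p) i (fun ω => Real.exp (l * f ω)) ω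
        = (1 - p i) * Real.exp (l * f (Function.update ω i false))
        + p i * Real.exp (l * f (Function.update ω i true)) := by
        simp [Av, ber]; ring
      rw [this]
      exact two_point (hp0 i) (hc i ω true false) (hl i)
    refine le_trans h2 ?_
    rw [Ex_mulc, Finset.sum_insert hi]
    refine le_trans (mul_le_mul_of_nonneg_right h1 (Real.exp_pos _).le) ?_
    rw [← Real.exp_add]
    apply le_of_eq
    congr 1
    ring

lemma markov_exp {A : Type} [Fintype A] {μ : ι → A → ℝ} (h : IsProb μ) (f : (ι → A) → ℝ)
    (l t : ℝ) (hl : 0 ≤ l) :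
    Ex μ (fun ω => ind (t < f ω)) ≤ Real.exp (- l * t) * Ex μ (fun ω => Real.exp (l * f ω)) := by
  rw [← Ex_cmul]
  apply Ex_mono h
  intro ω
  rw [← Real.exp_add]
  by_cases ht : t < f ω
  · rw [ind_true ht]
    apply Real.one_le_exp
    nlinarith
  · rw [ind_false ht]; exact (Real.exp_pos _).le

theorem mix {A : Type} [Fintype A] {μ : ι → A → ℝ} (h : IsProb μ) {κ : Type} [DecidableEq κ]
    (N : Finset κ) (b : κ → (ι → A) → ℝ) (X : κ → (ι → A) → Prop) (T T' : Finset ι)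
    (hb : ∀ u ∈ N, Dep T (b u)) (hX : ∀ u ∈ N, Dep T' (X u)) (hT : Disjoint T T')
    (β q l : ℝ) (hq0 : 0 ≤ q) (hq1 : q ≤ 1) (hl : 0 ≤ l) (hlβ : l * β ≤ 1)
    (hb0 : ∀ u ∈ N, ∀ ω, 0 ≤ b u ω) (hb1 : ∀ u ∈ N, ∀ ω, b u ω ≤ β)
    (hq : ∀ S ⊆ N, Ex μ (fun ω => ∏ u ∈ S, ind (X u ω)) ≤ q ^ S.card) :
    Ex μ (fun ω => Real.exp (l * ∑ u ∈ N, b u ω * ind (X u ω)))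
      ≤ Real.exp (l ^ 2 * (N.card * β ^ 2)) * 
        Ex μ (fun ω => Real.exp ((l * q) * ∑ u ∈ N, b u ω)) := by
  have e1 : ∀ ω, Real.exp (l * ∑ u ∈ N, b u ω * ind (X u ω))
      = ∑ S ∈ N.powerset, (∏ u ∈ S, (Real.exp (l * b u ω) - 1)) * ∏ u ∈ S, ind (X u ω) := by
    intro ω
    rw [Finset.mul_sum, Real.exp_sum]
    simp only [← Finset.prod_mul_distrib]
    rw [← Finset.prod_one_add]
    refine Finset.prod_congr rfl fun u _ => ?_
    by_cases hx : X u ω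
    · rw [ind_true hx]; simp
    · rw [ind_false hx]; simp
  have hpos : ∀ S ⊆ N, ∀ ω, 0 ≤ ∏ u ∈ S, (Real.exp (l * b u ω) - 1) := by
    intro S hS ω
    apply Finset.prod_nonneg
    intro u hu
    have := Real.one_le_exp (mul_nonneg hl (hb0 u (hS hu) ω))
    linarith
  calc Ex μ (fun ω => Real.exp (l * ∑ u ∈ N, b u ω * ind (X u ω)))
      = ∑ S ∈ N.powerset, Ex μ (fun ω => ∏ u ∈ S, (Real.exp (l * b u ω) - 1)) *
          Ex μ (fun ω => ∏ u ∈ S, ind (X u ω)) := by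
        simp only [e1]
        rw [Ex_sum]
        refine Finset.sum_congr rfl fun S hS => ?_
        rw [Finset.mem_powerset] at hS
        refine Ex_indep h (S := T) (T := T') ?_ ?_ hT
        · exact Dep.prod S fun u hu => (hb u (hS hu)).comp (fun x => Real.exp (l * x) - 1)
        · exact Dep.prod S fun u hu => (hX u (hS hu)).comp ind
    _ ≤ ∑ S ∈ N.powerset, Ex μ (fun ω => ∏ u ∈ S, (Real.exp (l * b u ω) - 1)) * q ^ S.card := by
        refine Finset.sum_le_sum fun S hS => ?_
        rw [Finset.mem_powerset] at hS
        exact mul_le_mul_of_nonneg_left (hq S hS) (Ex_nonneg h (hpos S hS))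
    _ = Ex μ (fun ω => ∏ u ∈ N, (1 + q * (Real.exp (l * b u ω) - 1))) := by
        simp only [Finset.prod_one_add, Finset.prod_mul_distrib, Finset.prod_const]
        rw [Ex_sum]
        refine Finset.sum_congr rfl fun S hS => ?_
        rw [Ex_cmul]; ring
    _ ≤ Ex μ (fun ω => Real.exp (l ^ 2 * (N.card * β ^ 2)) * 
          Real.exp ((l * q) * ∑ u ∈ N, b u ω)) := by
        apply Ex_mono h
        intro ω
        rw [← Real.exp_add]
        calc ∏ u ∈ N, (1 + q * (Real.exp (l * b u ω) - 1))
            ≤ ∏ u ∈ N, Real.exp (l ^ 2 * β ^ 2 + l * q * b u ω) := by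
              apply Finset.prod_le_prod
              · intro u hu
                have := Real.one_le_exp (mul_nonneg hl (hb0 u hu ω))
                have : 0 ≤ q * (Real.exp (l * b u ω) - 1) := mul_nonneg hq0 (by linarith)
                linarith
              · intro u hu
                have h0 := mul_nonneg hl (hb0 u hu ω)
                have h1 : l * b u ω ≤ l * β := mul_le_mul_of_nonneg_left (hb1 u hu ω) hl
                have h2 := exp_le_quad (d := l * b u ω) (by
                  rw [abs_of_nonneg h0]; linarith)
                have h3 : (l * b u ω) ^ 2 ≤ l ^ 2 * β ^ 2 := by
                  rw [← mul_pow]; exact pow_le_pow_left₀ h0 h1 2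
                have h4 : q * (Real.exp (l * b u ω) - 1) ≤ q * (l * b u ω + (l * b u ω) ^ 2) :=
                  mul_le_mul_of_nonneg_left (by linarith) hq0
                have h5 : q * (l * b u ω) ^ 2 ≤ (l * b u ω) ^ 2 := by
                  nlinarith [sq_nonneg (l * b u ω)]
                have h6 := Real.add_one_le_exp (l ^ 2 * β ^ 2 + l * q * b u ω)
                linarith
          _ = Real.exp (l ^ 2 * (N.card * β ^ 2) + l * q * ∑ u ∈ N, b u ω) := by
              rw [← Real.exp_sum, Finset.sum_add_distrib, Finset.mul_sum]
              simp
              ring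
    _ = _ := Ex_cmul _ _

end bern
end Nib

namespace Nib

section state
variable {V C : Type} [Fintype V] [DecidableEq V] [Fintype C] [DecidableEq C]

/-- neighbourhood of `v` -/
def nb (F : Finset (Sym2 V)) (v : V) : Finset V := Finset.univ.filter fun u => s(v, u) ∈ F

/-- edges at `v` -/
def star (F : Finset (Sym2 V)) (v : V) : Finset (Sym2 V) := F.filter fun e => v ∈ e

/-- hypotheses on a weighted edge set -/
structure St (F : Finset (Sym2 V)) (w : Sym2 V → C → ℝ) (R B D : ℝ) : Prop where
  nonneg : ∀ e c, 0 ≤ w e c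
  le : ∀ e c, w e c ≤ B / D
  one : ∀ e ∈ F, 1 ≤ ∑ c, w e c
  supp : ∀ e ∈ F, ((Finset.univ.filter fun c => w e c ≠ 0).card : ℝ) ≤ B * D
  deg : ∀ v, ((nb F v).card : ℝ) ≤ D
  vsum : ∀ v c, ∑ u ∈ nb F v, w s(v, u) c ≤ R

/-- proper colouring from the supports -/
def Col (F : Finset (Sym2 V)) (w : Sym2 V → C → ℝ) : Prop :=
  ∃ γ : Sym2 V → C, (∀ e ∈ F, 0 < w e (γ e)) ∧
    ∀ e ∈ F, ∀ f ∈ F, e ≠ f → (∃ v, v ∈ e ∧ v ∈ f) → γ e ≠ γ f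

lemma star_eq (F : Finset (Sym2 V)) (v : V) : star F v = (nb F v).image (fun u => s(v, u)) := by
  ext e
  simp only [star, nb, Finset.mem_filter, Finset.mem_image, Finset.mem_univ, true_and]
  constructor
  · rintro ⟨he, hv⟩
    obtain ⟨u, rfl⟩ := Sym2.mem_iff_exists.mp hv
    exact ⟨u, he, rfl⟩
  · rintro ⟨u, hu, rfl⟩
    exact ⟨hu, Sym2.mem_mk_left _ _⟩

lemma sum_star (F : Finset (Sym2 V)) (v : V) (g : Sym2 V → ℝ) :
    ∑ e ∈ star F v, g e = ∑ u ∈ nb F v, g s(v, u) := by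
  rw [star_eq, Finset.sum_image]
  intro a _ b _ hab
  exact Sym2.congr_right.mp hab

lemma card_star (F : Finset (Sym2 V)) (v : V) : (star F v).card = (nb F v).card := by
  rw [star_eq, Finset.card_image_of_injective]
  intro a b hab
  exact Sym2.congr_right.mp hab

/-- edges touching `e` -/
def tch (F : Finset (Sym2 V)) (e : Sym2 V) : Finset (Sym2 V) :=
  F.filter fun f => ∃ v, v ∈ e ∧ v ∈ f

lemma tch_mk (F : Finset (Sym2 V)) (a b : V) : tch F s(a, b) = star F a ∪ star F b := by
  ext f
  simp only [tch, star, Finset.mem_filter, Finset.mem_union, Sym2.mem_iff]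
  constructor
  · rintro ⟨hf, v, rfl | rfl, hv⟩
    · exact Or.inl ⟨hf, hv⟩
    · exact Or.inr ⟨hf, hv⟩
  · rintro (⟨hf, hv⟩ | ⟨hf, hv⟩)
    · exact ⟨hf, a, Or.inl rfl, hv⟩
    · exact ⟨hf, b, Or.inr rfl, hv⟩

lemma sum_tch_le {F : Finset (Sym2 V)} {w : Sym2 V → C → ℝ} {R B D : ℝ} (h : St F w R B D)
    (e : Sym2 V) (c : C) : ∑ f ∈ tch F e, w f c ≤ 2 * R := by
  induction e using Sym2.ind with
  | _ a b =>
    rw [tch_mk]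
    have h1 := h.vsum a c
    have h2 := h.vsum b c
    rw [← sum_star F a (fun e => w e c)] at h1
    rw [← sum_star F b (fun e => w e c)] at h2
    have h3 := Finset.sum_union_inter (s₁ := star F a) (s₂ := star F b) (f := fun e => w e c)
    have h4 : 0 ≤ ∑ e ∈ star F a ∩ star F b, w e c := Finset.sum_nonneg fun e _ => h.nonneg e c
    linarith

/-- finishing step -/
theorem base [Nonempty C] {F : Finset (Sym2 V)} {w : Sym2 V → C → ℝ} {R B D : ℝ} (h : St F w R B D)
    (hR : R ≤ 1/32) : Col F w := by
  classical
  set W : F → ℝ := fun e => ∑ c, w e c with hW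
  have hW1 : ∀ e : F, 1 ≤ W e := fun e => h.one e e.2
  set μ : F → C → ℝ := fun e c => w e c / W e with hμ
  have hμw : ∀ e c, μ e c ≤ w e c := fun e c => div_le_self (h.nonneg _ _) (hW1 e)
  have hprob : IsProb μ := ⟨fun e c => div_nonneg (h.nonneg _ _) (by linarith [hW1 e]), fun e => by
    simp only [hμ]
    rw [← Finset.sum_div]
    exact div_self (by linarith [hW1 e])⟩
  set E : F × F → (F → C) → Prop := fun j ω => 
    ((j.1 : Sym2 V) ≠ j.2 ∧ ∃ v, v ∈ (j.1 : Sym2 V) ∧ v ∈ (j.2 : Sym2 V)) ∧ ω j.1 = ω j.2 with hE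
  set P : F × F → ℝ := fun j => Ex μ (fun ω => ind (E j ω)) with hP
  have hP0 : ∀ j, 0 ≤ P j := fun j => Ex_nonneg hprob fun ω => ind_nonneg _
  have hsingle : ∀ (e : F) (c : C), Ex μ (fun ω => ind (ω e = c)) = μ e c := by
    intro e c
    rw [← Ex_Av hprob e, ← Ex_const hprob (μ e c)]
    congr 1
    funext ω
    simp [Av, ind]
  have hPj : ∀ e f : F, P (e, f) ≤ if (f : Sym2 V) ∈ tch F e then ∑ c, μ e c * w f c else 0 := by
    intro e f
    by_cases hc : (e : Sym2 V) ≠ f ∧ ∃ v, v ∈ (e : Sym2 V) ∧ v ∈ (f : Sym2 V)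
    · have hf : (f : Sym2 V) ∈ tch F e := Finset.mem_filter.mpr ⟨f.2, hc.2⟩
      rw [if_pos hf]
      calc P (e, f) ≤ Ex μ (fun ω => ∑ c, ind (ω e = c) * ind (ω f = c)) := by
            apply Ex_mono hprob
            intro ω
            by_cases hee : E (e, f) ω
            · rw [ind_true hee]
              refine le_trans ?_ (Finset.single_le_sum (f := fun c => ind (ω e = c) * ind (ω f = c))
                (fun c _ => mul_nonneg (ind_nonneg _) (ind_nonneg _)) (Finset.mem_univ (ω e)))
              have h1 : ind (ω e = ω e) = 1 := ind_true rfl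
              have h2 : ind (ω f = ω e) = 1 := ind_true hee.2.symm
              rw [h1, h2, mul_one]
            · rw [ind_false hee]
              exact Finset.sum_nonneg fun c _ => mul_nonneg (ind_nonneg _) (ind_nonneg _)
        _ = ∑ c, μ e c * μ f c := by
            rw [Ex_sum]
            refine Finset.sum_congr rfl fun c _ => ?_
            rw [Ex_indep hprob (S := {e}) (T := {f}), hsingle, hsingle]
            · intro ω ω' hω
              simp only
              rw [hω e (by simp)]
            · intro ω ω' hω
              simp only
              rw [hω f (by simp)]
            · simp only [Finset.disjoint_singleton]
              intro hef
              exact hc.1 (congrArg Subtype.val hef)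
        _ ≤ _ := Finset.sum_le_sum fun c _ => 
            mul_le_mul_of_nonneg_left (hμw f c) (hprob.nonneg e c)
    · have : P (e, f) = 0 := by
        simp only [hP, hE]
        have : (fun ω : F → C => ind ((((e : Sym2 V) ≠ f ∧ ∃ v, v ∈ (e : Sym2 V) ∧ v ∈ (f : Sym2 V))) ∧ ω e = ω f)) = fun _ => 0 := by
          funext ω
          exact ind_false fun h => hc h.1
        rw [this, Ex_const hprob]
      rw [this]
      split_ifs
      · exact Finset.sum_nonneg fun c _ => mul_nonneg (hprob.nonneg e c) (h.nonneg _ _)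
      · exact le_refl _
  have hPsymm : ∀ e f : F, P (e, f) = P (f, e) := by
    intro e f
    simp only [hP, hE]
    congr 1
    funext ω
    congr 1
    apply propext
    constructor
    · rintro ⟨⟨a, v, b, c⟩, d⟩
      exact ⟨⟨a.symm, v, c, b⟩, d.symm⟩
    · rintro ⟨⟨a, v, b, c⟩, d⟩
      exact ⟨⟨a.symm, v, c, b⟩, d.symm⟩
  have hPsum : ∀ e : F, ∑ f : F, P (e, f) ≤ 2 * R := by
    intro e
    calc ∑ f : F, P (e, f) ≤ ∑ f : F, if (f : Sym2 V) ∈ tch F e then ∑ c, μ e c * w f c else 0 :=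
          Finset.sum_le_sum fun f _ => hPj e f
      _ = ∑ f ∈ F, if (f : Sym2 V) ∈ tch F e then ∑ c, μ e c * w f c else 0 := 
          Finset.sum_coe_sort F (fun f => if (f : Sym2 V) ∈ tch F e then ∑ c, μ e c * w f c else 0)
      _ = ∑ f ∈ tch F e, ∑ c, μ e c * w f c := by
          rw [← Finset.sum_filter]
          congr 1
          ext f
          simp [tch]
      _ = ∑ c, μ e c * ∑ f ∈ tch F e, w f c := by
          rw [Finset.sum_comm]
          simp only [Finset.mul_sum]
      _ ≤ ∑ c, μ e c * (2 * R) := Finset.sum_le_sum fun c _ => 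
          mul_le_mul_of_nonneg_left (sum_tch_le h e c) (hprob.nonneg e c)
      _ = 2 * R := by rw [← Finset.sum_mul, hprob.sum_one, one_mul]
  obtain ⟨ω, hω, hgood⟩ := lll hprob E (fun j => {j.1, j.2}) (by
      intro j ω ω' hω
      simp only [hE]
      rw [hω j.1 (by simp), hω j.2 (by simp)]) (by
      intro j
      have hsub : (Finset.univ.filter fun k : F × F => ¬ Disjoint ({j.1, j.2} : Finset F) {k.1, k.2})
        ⊆ (Finset.univ.image (fun f : F => (j.1, f)) ∪ Finset.univ.image (fun f : F => (f, j.1))) ∪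
          (Finset.univ.image (fun f : F => (j.2, f)) ∪ Finset.univ.image (fun f : F => (f, j.2))) := by
        rintro ⟨k1, k2⟩ hk
        simp only [Finset.mem_filter, Finset.mem_univ, true_and, Finset.disjoint_insert_left, Finset.disjoint_singleton_left, Finset.mem_insert, Finset.mem_singleton] at hk
        simp only [Finset.mem_union, Finset.mem_image, Finset.mem_univ, true_and, Prod.mk.injEq, exists_eq_right, exists_eq, exists_and_right, true_and]
        have := fun x y : F => @eq_comm _ x y
        tauto
      have hL : ∀ e : F, ∑ k ∈ Finset.univ.image (fun f : F => (e, f)), P k ≤ 2 * R := by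
        intro e
        rw [Finset.sum_image (fun a _ b _ hab => (Prod.mk.inj hab).2)]
        exact hPsum e
      have hR' : ∀ e : F, ∑ k ∈ Finset.univ.image (fun f : F => (f, e)), P k ≤ 2 * R := by
        intro e
        rw [Finset.sum_image (fun a _ b _ hab => (Prod.mk.inj hab).1)]
        simp only [hPsymm _ e]
        exact hPsum e
      have hun : ∀ s t : Finset (F × F), ∑ k ∈ s ∪ t, P k ≤ ∑ k ∈ s, P k + ∑ k ∈ t, P k := by
        intro s t
        have := Finset.sum_union_inter (s₁ := s) (s₂ := t) (f := P)
        have : 0 ≤ ∑ k ∈ s ∩ t, P k := Finset.sum_nonneg fun k _ => hP0 k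
        linarith
      have := Finset.sum_le_sum_of_subset_of_nonneg hsub (f := P) fun k _ _ => hP0 k
      refine le_trans this ?_
      refine le_trans (hun _ _) ?_
      linarith [hun (Finset.univ.image (fun f : F => (j.1, f))) (Finset.univ.image (fun f : F => (f, j.1))),
        hun (Finset.univ.image (fun f : F => (j.2, f))) (Finset.univ.image (fun f : F => (f, j.2))),
        hL j.1, hL j.2, hR' j.1, hR' j.2]) (by
      intro j
      have := Finset.single_le_sum (f := fun f => P (j.1, f)) (fun f _ => hP0 _) (Finset.mem_univ j.2)
      have := hPsum j.1
      change P (j.1, j.2) ≤ 1/4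
      linarith)
  refine ⟨fun e => if he : e ∈ F then ω ⟨e, he⟩ else Classical.arbitrary C, ?_, ?_⟩
  · intro e he
    dsimp only
    rw [dif_pos he]
    have := Finset.prod_ne_zero_iff.mp hω ⟨e, he⟩ (Finset.mem_univ _)
    simp only [hμ] at this
    have h2 : w e (ω ⟨e, he⟩) ≠ 0 := by
      intro h0; apply this; simp [h0]
    exact lt_of_le_of_ne (h.nonneg _ _) h2.symm
  · intro e he f hf hef hv
    dsimp only
    rw [dif_pos he, dif_pos hf]
    intro hc
    exact hgood (⟨e, he⟩, ⟨f, hf⟩) ⟨⟨hef, hv⟩, hc⟩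

end state
end Nib

namespace Nib

lemma prod_one_sub_ge {κ : Type} [DecidableEq κ] (s : Finset κ) (x : κ → ℝ) (h0 : ∀ k ∈ s, 0 ≤ x k)
    (h1 : ∀ k ∈ s, x k ≤ 1) : 1 - ∑ k ∈ s, x k ≤ ∏ k ∈ s, (1 - x k) := by
  induction s using Finset.induction_on with
  | empty => simp
  | insert k s hk ih =>
    rw [Finset.sum_insert hk, Finset.prod_insert hk]
    have ih' := ih (fun l hl => h0 l (Finset.mem_insert_of_mem hl))
      (fun l hl => h1 l (Finset.mem_insert_of_mem hl))
    have a := h0 k (Finset.mem_insert_self _ _)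
    have b := h1 k (Finset.mem_insert_self _ _)
    have c : 0 ≤ ∑ l ∈ s, x l := Finset.sum_nonneg fun l hl => h0 l (Finset.mem_insert_of_mem hl)
    have d := mul_le_mul_of_nonneg_left ih' (by linarith : 0 ≤ 1 - x k)
    nlinarith [mul_nonneg a c]

section round
variable {V C : Type} [Fintype V] [DecidableEq V] [Fintype C] [DecidableEq C]
variable (F : Finset (Sym2 V)) (w : Sym2 V → C → ℝ) (θ : ℝ)

/-- activation probabilities -/
def pr (i : Sym2 V × C) : ℝ := θ * w i.1 i.2

/-- probability that `v` keeps `c` -/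
def kp (v : V) (c : C) : ℝ := ∏ e ∈ star F v, (1 - θ * w e c)

/-- `v` keeps `c` -/
def Y (ω : Sym2 V × C → Bool) (v : V) (c : C) : Prop := ∀ e ∈ star F v, ω (e, c) = false

/-- both ends of `e` keep `c` -/
def YE (ω : Sym2 V × C → Bool) (e : Sym2 V) (c : C) : Prop := ∀ f ∈ tch F e, ω (f, c) = false

/-- `e` is in the matching of colour `c` -/
def M (ω : Sym2 V × C → Bool) (e : Sym2 V) (c : C) : Prop :=
  ω (e, c) = true ∧ ∀ f ∈ (tch F e).erase e, ω (f, c) = false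

/-- normalisation at an edge -/
def KE (e : Sym2 V) (c : C) : ℝ :=
  Sym2.lift ⟨fun a b => kp F w θ a c * kp F w θ b c, fun _ _ => mul_comm _ _⟩ e

/-- new total weight of `e` -/
noncomputable def fe (ω : Sym2 V × C → Bool) (e : Sym2 V) : ℝ :=
  ∑ c, w e c * ind (YE F ω e c) / KE F w θ e c

/-- `e` not coloured by colours other than `c` -/
def X (ω : Sym2 V × C → Bool) (e : Sym2 V) (c : C) : Prop := ∀ c' ∈ Finset.univ.erase c, ¬ M F ω e c'

/-- summand -/
noncomputable def bb (v : V) (c : C) (u : V) (ω : Sym2 V × C → Bool) : ℝ :=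
  w s(v, u) c * ind (Y F ω u c) / kp F w θ u c

/-- new sum at `(v,c)` -/
noncomputable def Z (ω : Sym2 V × C → Bool) (v : V) (c : C) : ℝ :=
  ∑ u ∈ nb F v, bb F w θ v c u ω * ind (X F ω s(v, u) c)

variable {F w θ} {R B D : ℝ}

/-- parameters -/
structure Par (F : Finset (Sym2 V)) (w : Sym2 V → C → ℝ) (θ R B D : ℝ) : Prop where
  st : St F w R B D
  θ0 : 0 < θ
  θ1 : θ ≤ 1/4
  R0 : 0 ≤ R
  R1 : R ≤ 1
  B1 : 1 ≤ B
  BD : B ≤ D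

namespace Par

lemma D0 (h : Par F w θ R B D) : 0 < D := by linarith [h.B1, h.BD]
lemma w_le_one (h : Par F w θ R B D) (e : Sym2 V) (c : C) : w e c ≤ 1 :=
  le_trans (h.st.le e c) ((div_le_one h.D0).mpr h.BD)
lemma pr0 (h : Par F w θ R B D) (i) : 0 ≤ pr w θ i := mul_nonneg h.θ0.le (h.st.nonneg _ _)
lemma pr1 (h : Par F w θ R B D) (i) : pr w θ i ≤ 1 := by
  have := h.w_le_one i.1 i.2
  have := h.st.nonneg i.1 i.2
  have := h.θ0
  have := h.θ1
  unfold pr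
  nlinarith
lemma prob (h : Par F w θ R B D) : IsProb (ber (pr w θ)) := ber_prob h.pr0 h.pr1

lemma star_sum (h : Par F w θ R B D) (v : V) (c : C) : ∑ e ∈ star F v, w e c ≤ R := by
  rw [sum_star F v (fun e => w e c)]; exact h.st.vsum v c

lemma kp_ge (h : Par F w θ R B D) (v : V) (c : C) : 1 - θ * R ≤ kp F w θ v c := by
  refine le_trans ?_ (prod_one_sub_ge _ _ (fun e _ => h.pr0 (e, c)) (fun e _ => h.pr1 (e, c)))
  rw [← Finset.mul_sum]
  have := mul_le_mul_of_nonneg_left (h.star_sum v c) h.θ0.le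
  linarith

lemma kp_ge' (h : Par F w θ R B D) (v : V) (c : C) : 3/4 ≤ kp F w θ v c := by
  have := h.kp_ge v c
  have := h.θ0
  have := h.θ1
  have := h.R0
  have := h.R1
  nlinarith

lemma KE_ge (h : Par F w θ R B D) (e : Sym2 V) (c : C) : 1/2 ≤ KE F w θ e c := by
  induction e using Sym2.ind with
  | _ a b =>
    have h1 := h.kp_ge' a c
    have h2 := h.kp_ge' b c
    simp only [KE, Sym2.lift_mk]
    nlinarith

lemma Ex_Y (h : Par F w θ R B D) (v : V) (c : C) : Ex (ber (pr w θ)) (fun ω => ind (Y F ω v c)) = kp F w θ v c := by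
  have := Ex_all_false h.prob ((star F v).image fun e => (e, c))
  rw [Finset.prod_image (fun a _ b _ hab => (Prod.mk.inj hab).1)] at this
  simp only [Finset.forall_mem_image] at this
  exact this

lemma Ex_YE (h : Par F w θ R B D) (e : Sym2 V) (c : C) :
    KE F w θ e c ≤ Ex (ber (pr w θ)) (fun ω => ind (YE F ω e c)) := by
  have := Ex_all_false h.prob ((tch F e).image fun e => (e, c))
  rw [Finset.prod_image (fun a _ b _ hab => (Prod.mk.inj hab).1)] at this
  simp only [Finset.forall_mem_image] at this
  change Ex (ber (pr w θ)) (fun ω => ind (YE F ω e c)) = _ at this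
  rw [this]
  induction e using Sym2.ind with
  | _ a b =>
    rw [tch_mk]
    simp only [KE, Sym2.lift_mk, kp]
    rw [← Finset.prod_union_inter]
    apply mul_le_of_le_one_right
    · exact Finset.prod_nonneg fun e _ => by
        have := h.pr1 (e, c); simp only [pr] at this; linarith
    · apply Finset.prod_le_one
      · exact fun e _ => by
          have := h.pr1 (e, c); simp only [pr] at this; linarith
      · exact fun e _ => by
          have := h.pr0 (e, c); simp only [pr] at this; linarith

lemma Ex_M (h : Par F w θ R B D) (e : Sym2 V) (c : C) :
    θ * (1 - 2 * θ) * w e c ≤ Ex (ber (pr w θ)) (fun ω => ind (M F ω e c)) := by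
  have := Ex_true_all_false h.prob (e, c) (((tch F e).erase e).image fun e => (e, c)) (by simp)
  rw [Finset.prod_image (fun a _ b _ hab => (Prod.mk.inj hab).1)] at this
  simp only [Finset.forall_mem_image] at this
  change Ex (ber (pr w θ)) (fun ω => ind (M F ω e c)) = _ at this
  rw [this]
  have h1 := prod_one_sub_ge ((tch F e).erase e) _ (fun e _ => h.pr0 (e, c)) (fun e _ => h.pr1 (e, c))
  have h2 : ∑ f ∈ (tch F e).erase e, pr w θ (f, c) ≤ 2 * θ := by
    simp only [pr]
    rw [← Finset.mul_sum]
    have h3 : ∑ f ∈ (tch F e).erase e, w f c ≤ ∑ f ∈ tch F e, w f c :=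
      Finset.sum_le_sum_of_subset_of_nonneg (Finset.erase_subset _ _) fun f _ _ => h.st.nonneg f c
    have h4 := sum_tch_le h.st e c
    have := h.R1
    have := h.θ0
    nlinarith
  have h5 := mul_le_mul_of_nonneg_left (le_trans (by linarith) h1 : 1 - 2 * θ ≤ _) (h.pr0 (e, c))
  refine le_trans (le_of_eq ?_) h5
  simp only [pr]; ring

lemma YE_congr (h : Par F w θ R B D) {ω ω' : Sym2 V × C → Bool} {e : Sym2 V} {c : C}
    (hω : ∀ f ∈ tch F e, ω (f, c) = ω' (f, c)) : YE F ω e c = YE F ω' e c := by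
  simp only [YE, eq_iff_iff]
  exact forall₂_congr fun f hf => by rw [hω f hf]

lemma Y_congr (h : Par F w θ R B D) {ω ω' : Sym2 V × C → Bool} {v : V} {c : C}
    (hω : ∀ f ∈ star F v, ω (f, c) = ω' (f, c)) : Y F ω v c = Y F ω' v c := by
  simp only [Y, eq_iff_iff]
  exact forall₂_congr fun f hf => by rw [hω f hf]

lemma M_congr (h : Par F w θ R B D) {ω ω' : Sym2 V × C → Bool} {e : Sym2 V} {c : C} (he : e ∈ tch F e)
    (hω : ∀ f ∈ tch F e, ω (f, c) = ω' (f, c)) : M F ω e c = M F ω' e c := by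
  simp only [M, eq_iff_iff]
  rw [hω e he]
  refine and_congr_right fun _ => ?_
  exact forall₂_congr fun f hf => by rw [hω f (Finset.mem_of_mem_erase hf)]

lemma tail_A (h : Par F w θ R B D) (e : Sym2 V) (he : e ∈ F) (ε l : ℝ) (hl : 0 ≤ l) (hlB : l * (4 * B / D) ≤ 1) :
    Ex (ber (pr w θ)) (fun ω => ind (fe F w θ ω e < 1 - ε))
      ≤ Real.exp (- l * ε + l ^ 2 * (6 * B ^ 3 / D)) := by
  classical
  set cc : Sym2 V × C → ℝ := fun i => if i.1 ∈ tch F e then 2 * w e i.2 else 0 with hcc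
  have hD := h.D0
  have hB := h.B1
  have hterm : ∀ ω c, 0 ≤ w e c * ind (YE F ω e c) / KE F w θ e c ∧
      w e c * ind (YE F ω e c) / KE F w θ e c ≤ 2 * w e c := by
    intro ω c
    have h1 := h.KE_ge e c
    have h2 := h.st.nonneg e c
    have h3 := ind_nonneg (YE F ω e c)
    have h4 := ind_le_one (YE F ω e c)
    constructor
    · positivity
    · rw [div_le_iff₀ (by linarith)]
      nlinarith
  have hb := bernstein h.prob h.pr0 h.pr1 cc (-l) (by
      intro i
      rw [abs_neg, abs_of_nonneg hl]
      simp only [hcc]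
      split_ifs
      · have := h.st.le e i.2
        have h2 : 2 * w e i.2 ≤ 4 * B / D := by
          have : 0 ≤ B / D := by positivity
          rw [mul_div_assoc]; linarith
        exact le_trans (mul_le_mul_of_nonneg_left h2 hl) hlB
      · simp) Finset.univ (fun ω => fe F w θ ω e) (by
      intro ω ω' hω
      have : ω = ω' := funext fun i => hω i (Finset.mem_univ i)
      rw [this]) (by
      rintro ⟨f, c'⟩ ω b b'
      simp only [fe]
      rw [← Finset.sum_sub_distrib, Finset.sum_eq_single c']
      · simp only [hcc]
        split_ifs with hf
        · have h1 := hterm (Function.update ω (f, c') b) c'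
          have h2 := hterm (Function.update ω (f, c') b') c'
          rw [abs_le]
          constructor <;> linarith
        · rw [YE_congr h (ω' := Function.update ω (f, c') b'), sub_self, abs_zero]
          intro f' hf'
          rw [Function.update_of_ne, Function.update_of_ne]
          · intro hh; rw [(Prod.mk.inj hh).1] at hf'; exact hf hf'
          · intro hh; rw [(Prod.mk.inj hh).1] at hf'; exact hf hf'
      · intro c _ hc
        rw [YE_congr h (ω' := Function.update ω (f, c') b'), sub_self]
        intro f' hf'
        rw [Function.update_of_ne, Function.update_of_ne]
        · intro hh; exact hc (Prod.mk.inj hh).2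
        · intro hh; exact hc (Prod.mk.inj hh).2
      · simp)
  have hmean : 1 ≤ Ex (ber (pr w θ)) (fun ω => fe F w θ ω e) := by
    simp only [fe]
    rw [Ex_sum]
    refine le_trans (h.st.one e he) (Finset.sum_le_sum fun c _ => ?_)
    have : (fun ω => w e c * ind (YE F ω e c) / KE F w θ e c)
      = fun ω => (w e c / KE F w θ e c) * ind (YE F ω e c) := by funext ω; ring
    rw [this, Ex_cmul]
    have h1 := h.KE_ge e c
    have h2 := h.Ex_YE e c
    have h3 := h.st.nonneg e c
    calc w e c = (w e c / KE F w θ e c) * KE F w θ e c := by field_simp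
      _ ≤ _ := mul_le_mul_of_nonneg_left h2 (div_nonneg h3 (by linarith))
  have hvar : ∑ i : Sym2 V × C, pr w θ i * cc i ^ 2 ≤ 6 * B ^ 3 / D := by
    rw [Fintype.sum_prod_type_right]
    calc ∑ c, ∑ f, pr w θ (f, c) * cc (f, c) ^ 2
        ≤ ∑ c, if w e c ≠ 0 then 2 * (B / D) ^ 2 else 0 := by
          refine Finset.sum_le_sum fun c _ => ?_
          have e1 : ∀ f, pr w θ (f, c) * cc (f, c) ^ 2
            = if f ∈ tch F e then (θ * w f c) * (2 * w e c) ^ 2 else 0 := by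
            intro f
            simp only [pr, hcc]
            split_ifs <;> simp
          simp only [e1]
          rw [← Finset.sum_filter, Finset.filter_mem_eq_inter, Finset.univ_inter,
            ← Finset.sum_mul, ← Finset.mul_sum]
          split_ifs with hw
          · have h1 := sum_tch_le h.st e c
            have h2 := h.st.le e c
            have h3 := h.st.nonneg e c
            have h4 : (2 * w e c) ^ 2 ≤ 4 * (B / D) ^ 2 := by nlinarith
            have h5 : θ * ∑ f ∈ tch F e, w f c ≤ 1/2 := by
              have := h.θ0; have := h.θ1; have := h.R1
              have : 0 ≤ ∑ f ∈ tch F e, w f c := Finset.sum_nonneg fun f _ => h.st.nonneg f c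
              nlinarith
            calc _ ≤ 1/2 * (4 * (B / D) ^ 2) := 
                  mul_le_mul h5 h4 (by positivity) (by norm_num)
              _ = _ := by ring
          · rw [not_not] at hw
            rw [hw]; simp
      _ = ((Finset.univ.filter fun c => w e c ≠ 0).card : ℝ) * (2 * (B / D) ^ 2) := by
          rw [← Finset.sum_filter, Finset.sum_const, nsmul_eq_mul]
      _ ≤ (B * D) * (2 * (B / D) ^ 2) := 
          mul_le_mul_of_nonneg_right (h.st.supp e he) (by positivity)
      _ = 2 * B ^ 3 / D := by field_simp
      _ ≤ 6 * B ^ 3 / D := by gcongr; norm_num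
  have hm := markov_exp h.prob (fun ω => - fe F w θ ω e) l (-(1 - ε)) hl
  have e2 : (fun ω => ind (fe F w θ ω e < 1 - ε)) = fun ω => ind (-(1 - ε) < - fe F w θ ω e) := by
    funext ω; rw [neg_lt_neg_iff]
  rw [e2]
  refine le_trans hm ?_
  have e3 : (fun ω => Real.exp (l * - fe F w θ ω e)) = fun ω => Real.exp (-l * fe F w θ ω e) := by
    funext ω; congr 1; ring
  rw [e3]
  refine le_trans (mul_le_mul_of_nonneg_left hb (Real.exp_pos _).le) ?_
  rw [← Real.exp_add]
  apply Real.exp_le_exp.mpr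
  have h1 := mul_le_mul_of_nonneg_left hmean hl
  have h2 := mul_le_mul_of_nonneg_left hvar (sq_nonneg l)
  nlinarith

end Par
end round
end Nib

namespace Nib
section round
variable {V C : Type} [Fintype V] [DecidableEq V] [Fintype C] [DecidableEq C]
variable {F : Finset (Sym2 V)} {w : Sym2 V → C → ℝ} {θ R B D : ℝ}
namespace Par

lemma self_tch (h : Par F w θ R B D) {e : Sym2 V} (he : e ∈ F) : e ∈ tch F e := by
  induction e using Sym2.ind with
  | _ a b =>
    exact Finset.mem_filter.mpr ⟨he, a, Sym2.mem_mk_left _ _, Sym2.mem_mk_left _ _⟩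

lemma negcor (h : Par F w θ R B D) (v : V) (c : C) (S : Finset V) (hS : S ⊆ nb F v) :
    Ex (ber (pr w θ)) (fun ω => ∏ u ∈ S, ind (X F ω s(v, u) c))
      ≤ Real.exp (- (θ * (1 - 2 * θ) * (1 - B / D))) ^ S.card := by
  classical
  have hSF : ∀ u ∈ S, s(v, u) ∈ F := fun u hu => (Finset.mem_filter.mp (hS hu)).2
  have e1 : (fun ω => ∏ u ∈ S, ind (X F ω s(v, u) c))
      = fun ω => ∏ c' ∈ Finset.univ.erase c, ind (∀ u ∈ S, ¬ M F ω s(v, u) c') := by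
    funext ω
    rw [← ind_all, ← ind_all]
    congr 1
    simp only [X, eq_iff_iff]
    exact ⟨fun hh c' hc' u hu => hh u hu c' hc', fun hh u hu c' hc' => hh c' hc' u hu⟩
  rw [e1, Ex_prod_indep h.prob _ (fun c' => Finset.univ.filter fun i => i.2 = c')]
  rotate_left
  · intro c' _ ω ω' hω
    simp only
    congr 1
    simp only [eq_iff_iff]
    refine forall₂_congr fun u hu => ?_
    rw [h.M_congr (ω' := ω') (h.self_tch (hSF u hu))]
    intro f _
    exact hω (f, c') (by simp)
  · intro k _ l _ hkl
    rw [Finset.disjoint_left]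
    intro i hi hi'
    exact hkl ((Finset.mem_filter.mp hi).2.symm.trans (Finset.mem_filter.mp hi').2)
  have h1 : ∀ c', Ex (ber (pr w θ)) (fun ω => ind (∀ u ∈ S, ¬ M F ω s(v, u) c'))
      ≤ Real.exp (- ∑ u ∈ S, θ * (1 - 2 * θ) * w s(v, u) c') := by
    intro c'
    have h2 : Ex (ber (pr w θ)) (fun ω => ind (∀ u ∈ S, ¬ M F ω s(v, u) c'))
        ≤ Ex (ber (pr w θ)) (fun ω => 1 - ∑ u ∈ S, ind (M F ω s(v, u) c')) := by
      apply Ex_mono h.prob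
      intro ω
      by_cases hh : ∀ u ∈ S, ¬ M F ω s(v, u) c'
      · rw [ind_true hh, Finset.sum_eq_zero fun u hu => ind_false (hh u hu)]
        simp
      · rw [ind_false hh]
        push Not at hh
        obtain ⟨u0, hu0, hM⟩ := hh
        rw [Finset.sum_eq_single u0]
        · rw [ind_true hM]; simp
        · intro u hu hne
          apply ind_false
          intro hM'
          have : ω (s(v, u), c') = false := by
            apply hM.2
            refine Finset.mem_erase.mpr ⟨?_, Finset.mem_filter.mpr ⟨hSF u hu, v, Sym2.mem_mk_left _ _, Sym2.mem_mk_left _ _⟩⟩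
            intro heq
            exact hne (Sym2.congr_right.mp heq)
          rw [hM'.1] at this
          exact absurd this (by simp)
        · intro hh; exact absurd hu0 hh
    refine le_trans h2 ?_
    rw [Ex_sub, Ex_const h.prob, Ex_sum]
    have h3 : ∑ u ∈ S, θ * (1 - 2 * θ) * w s(v, u) c' ≤
      ∑ u ∈ S, Ex (ber (pr w θ)) (fun ω => ind (M F ω s(v, u) c')) :=
      Finset.sum_le_sum fun u _ => h.Ex_M _ _
    have h4 := Real.add_one_le_exp (- ∑ u ∈ S, θ * (1 - 2 * θ) * w s(v, u) c')
    linarith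
  refine le_trans (Finset.prod_le_prod (fun c' _ => Ex_nonneg h.prob fun ω => ind_nonneg _)
    fun c' _ => h1 c') ?_
  rw [← Real.exp_sum, ← Real.exp_nat_mul, Finset.sum_neg_distrib, Finset.sum_comm, mul_neg]
  apply Real.exp_le_exp.mpr
  apply neg_le_neg
  rw [← nsmul_eq_mul, ← Finset.sum_const]
  refine Finset.sum_le_sum fun u hu => ?_
  rw [← Finset.mul_sum]
  have h0 := h.θ0
  have h0' := h.θ1
  apply mul_le_mul_of_nonneg_left _ (mul_nonneg h0.le (by linarith))
  have h5 := h.st.one _ (hSF u hu)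
  rw [← Finset.add_sum_erase _ _ (Finset.mem_univ c)] at h5
  have := h.st.le s(v, u) c
  linarith

lemma bb_bd (h : Par F w θ R B D) (v : V) (c : C) (u : V) (ω : Sym2 V × C → Bool) :
    0 ≤ bb F w θ v c u ω ∧ bb F w θ v c u ω ≤ 2 * w s(v, u) c := by
  have h1 := h.kp_ge' u c
  have h2 := h.st.nonneg s(v, u) c
  have h3 := ind_nonneg (Y F ω u c)
  have h4 := ind_le_one (Y F ω u c)
  unfold bb
  constructor
  · positivity
  · rw [div_le_iff₀ (by linarith)]
    nlinarith

lemma exp_B (h : Par F w θ R B D) (v : V) (c : C) (l : ℝ) (hl : 0 ≤ l) (hlB : l * (4 * B / D) ≤ 1) :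
    Ex (ber (pr w θ)) (fun ω => Real.exp (l * ∑ u ∈ nb F v, bb F w θ v c u ω))
      ≤ Real.exp (l * R + l ^ 2 * (2 * B / D)) := by
  classical
  have hD := h.D0
  have hB := h.B1
  have hBD : 0 ≤ B / D := by positivity
  set g : Sym2 V → ℝ := fun f => ∑ u ∈ (nb F v).filter (fun u => u ∈ f), 2 * w s(v, u) c with hg
  have hg0 : ∀ f, 0 ≤ g f := fun f => Finset.sum_nonneg fun u _ => by
    have := h.st.nonneg s(v, u) c; linarith
  have hg1 : ∀ f, g f ≤ 4 * B / D := by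
    intro f
    have hcard : ((nb F v).filter (fun u => u ∈ f)).card ≤ 2 := by
      induction f using Sym2.ind with
      | _ a b =>
        refine le_trans (Finset.card_le_card (t := {a, b}) ?_) Finset.card_le_two
        intro u hu
        have := (Finset.mem_filter.mp hu).2
        simpa [Sym2.mem_iff] using this
    calc g f ≤ ∑ u ∈ (nb F v).filter (fun u => u ∈ f), 2 * (B / D) := 
          Finset.sum_le_sum fun u _ => by have := h.st.le s(v, u) c; linarith
      _ = (((nb F v).filter (fun u => u ∈ f)).card : ℝ) * (2 * (B / D)) := by
          rw [Finset.sum_const, nsmul_eq_mul]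
      _ ≤ 2 * (2 * (B / D)) := mul_le_mul_of_nonneg_right (by exact_mod_cast hcard) (by linarith)
      _ = 4 * B / D := by ring
  set cc : Sym2 V × C → ℝ := fun i => if i.2 = c ∧ i.1 ∈ F then g i.1 else 0 with hcc
  have hb := bernstein h.prob h.pr0 h.pr1 cc l (by
      intro i
      rw [abs_of_nonneg hl]
      simp only [hcc]
      split_ifs
      · exact le_trans (mul_le_mul_of_nonneg_left (hg1 _) hl) hlB
      · simp) Finset.univ (fun ω => ∑ u ∈ nb F v, bb F w θ v c u ω) (by
      intro ω ω' hω
      have : ω = ω' := funext fun i => hω i (Finset.mem_univ i)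
      rw [this]) (by
      rintro ⟨f, c'⟩ ω b b'
      rw [← Finset.sum_sub_distrib]
      refine le_trans (Finset.abs_sum_le_sum_abs _ _) ?_
      have hz : ∀ u, ¬ (c' = c ∧ f ∈ F ∧ u ∈ f) → 
          |bb F w θ v c u (Function.update ω (f, c') b) - bb F w θ v c u (Function.update ω (f, c') b')| = 0 := by
        intro u hu
        unfold bb
        rw [h.Y_congr (ω' := Function.update ω (f, c') b'), sub_self, abs_zero]
        intro f' hf'
        have hf'' := Finset.mem_filter.mp hf'
        have hne : (f', c) ≠ (f, c') := by
          intro hh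
          obtain ⟨rfl, rfl⟩ := Prod.mk.inj hh
          exact hu ⟨rfl, hf''.1, hf''.2⟩
        rw [Function.update_of_ne hne, Function.update_of_ne hne]
      simp only [hcc]
      split_ifs with hcf
      · simp only [hg]
        rw [Finset.sum_filter]
        refine Finset.sum_le_sum fun u _ => ?_
        split_ifs with huf
        · have h1 := h.bb_bd v c u (Function.update ω (f, c') b)
          have h2 := h.bb_bd v c u (Function.update ω (f, c') b')
          rw [abs_le]
          constructor <;> linarith
        · rw [hz u fun hh => huf hh.2.2]
      · rw [Finset.sum_eq_zero]
        intro u _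
        exact hz u fun hh => hcf ⟨hh.1, hh.2.1⟩)
  refine le_trans hb (Real.exp_le_exp.mpr ?_)
  have hmean : Ex (ber (pr w θ)) (fun ω => ∑ u ∈ nb F v, bb F w θ v c u ω) ≤ R := by
    rw [Ex_sum]
    refine le_trans (le_of_eq (Finset.sum_congr rfl fun u _ => ?_)) (h.st.vsum v c)
    have : bb F w θ v c u = fun ω => (w s(v, u) c / kp F w θ u c) * ind (Y F ω u c) := by
      funext ω; unfold bb; ring
    rw [this, Ex_cmul, h.Ex_Y]
    have := h.kp_ge' u c
    field_simp
  have hvar : ∑ i : Sym2 V × C, pr w θ i * cc i ^ 2 ≤ 2 * B / D := by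
    rw [Fintype.sum_prod_type_right, Finset.sum_eq_single c]
    rotate_left
    · intro c' _ hc'
      apply Finset.sum_eq_zero
      intro f _
      simp [hcc, hc']
    · simp
    calc ∑ f, pr w θ (f, c) * cc (f, c) ^ 2
        = ∑ f ∈ F, pr w θ (f, c) * g f ^ 2 := by
          rw [← Finset.sum_subset (Finset.subset_univ F)]
          · refine Finset.sum_congr rfl fun f hf => ?_
            simp [hcc, hf]
          · intro f _ hf
            simp [hcc, hf]
      _ ≤ ∑ f ∈ F, (B / D) * (w f c * g f) := by
          refine Finset.sum_le_sum fun f _ => ?_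
          simp only [pr]
          have a1 := hg0 f
          have a2 := hg1 f
          have a3 := h.st.nonneg f c
          have a4 := h.θ0
          have a5 := h.θ1
          have a6 : θ * g f ≤ B / D := by
            rw [mul_div_assoc] at a2; nlinarith
          have a7 := mul_le_mul_of_nonneg_right a6 (mul_nonneg a3 a1)
          linarith
      _ = (B / D) * ∑ u ∈ nb F v, 2 * w s(v, u) c * ∑ f ∈ star F u, w f c := by
          rw [← Finset.mul_sum]
          congr 1
          simp only [hg, star, Finset.sum_filter, Finset.mul_sum]
          rw [Finset.sum_comm]
          refine Finset.sum_congr rfl fun u _ => Finset.sum_congr rfl fun f _ => ?_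
          split_ifs <;> ring
      _ ≤ (B / D) * ∑ u ∈ nb F v, 2 * w s(v, u) c := by
          apply mul_le_mul_of_nonneg_left _ hBD
          refine Finset.sum_le_sum fun u _ => ?_
          have := h.star_sum u c
          have := h.R1
          have := h.st.nonneg s(v, u) c
          nlinarith
      _ ≤ (B / D) * 2 := by
          apply mul_le_mul_of_nonneg_left _ hBD
          rw [← Finset.mul_sum]
          have := h.st.vsum v c
          have := h.R1
          linarith
      _ = _ := by ring
  have h1 := mul_le_mul_of_nonneg_left hmean hl
  have h2 := mul_le_mul_of_nonneg_left hvar (sq_nonneg l)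
  linarith

lemma tail_B (h : Par F w θ R B D) (v : V) (c : C) (ε l : ℝ) (hl : 0 ≤ l) (hlB : l * (4 * B / D) ≤ 1) :
    Ex (ber (pr w θ)) (fun ω => ind
      (Real.exp (- (θ * (1 - 2 * θ) * (1 - B / D))) * R + ε < Z F w θ ω v c))
      ≤ Real.exp (- l * ε + l ^ 2 * (6 * B ^ 3 / D)) := by
  classical
  have hD := h.D0
  have hB := h.B1
  have hBD : 0 ≤ B / D := by positivity
  have hBD1 : B / D ≤ 1 := (div_le_one hD).mpr h.BD
  set q := Real.exp (- (θ * (1 - 2 * θ) * (1 - B / D))) with hq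
  have hq0 : 0 ≤ q := (Real.exp_pos _).le
  have hq1 : q ≤ 1 := by
    rw [hq, Real.exp_le_one_iff]
    have := h.θ0
    have := h.θ1
    have : 0 ≤ θ * (1 - 2 * θ) * (1 - B / D) := 
      mul_nonneg (mul_nonneg (by linarith) (by linarith)) (by linarith)
    linarith
  have hmix := mix h.prob (nb F v) (fun u ω => bb F w θ v c u ω) (fun u ω => X F ω s(v, u) c)
    (Finset.univ.filter fun i => i.2 = c) (Finset.univ.filter fun i => i.2 ≠ c)
    (by
      intro u hu ω ω' hω
      simp only [bb]
      rw [h.Y_congr (ω' := ω')]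
      intro f _
      exact hω (f, c) (by simp))
    (by
      intro u hu ω ω' hω
      simp only [X, eq_iff_iff]
      refine forall₂_congr fun c' hc' => ?_
      rw [h.M_congr (ω' := ω') (h.self_tch (Finset.mem_filter.mp hu).2)]
      intro f _
      exact hω (f, c') (by simpa using hc'))
    (by
      rw [Finset.disjoint_left]
      intro i hi hi'
      exact (Finset.mem_filter.mp hi').2 (Finset.mem_filter.mp hi).2)
    (2 * (B / D)) q l hq0 hq1 hl (by
      have : l * (4 * B / D) = 2 * (l * (2 * (B / D))) := by ring
      have : 0 ≤ l * (2 * (B / D)) := by positivity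
      linarith)
    (fun u _ ω => (h.bb_bd v c u ω).1)
    (fun u _ ω => le_trans (h.bb_bd v c u ω).2 (by have := h.st.le s(v, u) c; linarith))
    (fun S hS => h.negcor v c S hS)
  have hlq : 0 ≤ l * q := mul_nonneg hl hq0
  have h4 : 0 ≤ 4 * B / D := by positivity
  have hexp := h.exp_B v c (l * q) hlq (le_trans (mul_le_mul_of_nonneg_right 
    (mul_le_of_le_one_right hl hq1) h4) hlB)
  have hm := markov_exp h.prob (fun ω => Z F w θ ω v c) l (q * R + ε) hl
  refine le_trans hm ?_
  refine le_trans (mul_le_mul_of_nonneg_left (le_trans hmix (mul_le_mul_of_nonneg_left hexp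
    (Real.exp_pos _).le)) (Real.exp_pos _).le) ?_
  rw [← Real.exp_add, ← Real.exp_add]
  apply Real.exp_le_exp.mpr
  have hlq2 : (l * q) ^ 2 ≤ l ^ 2 := pow_le_pow_left₀ hlq (mul_le_of_le_one_right hl hq1) 2
  have e1 : ((nb F v).card : ℝ) * (2 * (B / D)) ^ 2 ≤ 4 * B ^ 2 / D := by
    calc _ ≤ D * (2 * (B / D)) ^ 2 := mul_le_mul_of_nonneg_right (h.st.deg v) (by positivity)
      _ = _ := by field_simp; ring
  have e2 := mul_le_mul_of_nonneg_left e1 (sq_nonneg l)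
  have e3 := mul_le_mul_of_nonneg_right hlq2 (by positivity : 0 ≤ 2 * B / D)
  have e4 : 4 * B ^ 2 / D + 2 * B / D ≤ 6 * B ^ 3 / D := by
    rw [← add_div]
    apply div_le_div_of_nonneg_right _ hD.le
    have : B ≤ B ^ 2 := by nlinarith
    have : B ^ 2 ≤ B ^ 3 := by nlinarith [sq_nonneg B]
    linarith
  have e5 := mul_le_mul_of_nonneg_left e4 (sq_nonneg l)
  linarith

end Par
end round
end Nib

namespace Nib
section rnd
variable {V C : Type} [Fintype V] [DecidableEq V] [Fintype C] [DecidableEq C]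

/-- closed neighbourhood -/
def N1 (F : Finset (Sym2 V)) (v : V) : Finset V := insert v (nb F v)

lemma mem_N1 {F : Finset (Sym2 V)} {v u : V} : u ∈ N1 F v ↔ u = v ∨ s(v, u) ∈ F := by
  simp [N1, nb]

/-- the variables relevant for `v` -/
def SV (F : Finset (Sym2 V)) (v : V) : Finset (Sym2 V × C) :=
  Finset.univ.filter fun i => i.1 ∈ F ∧ ∃ a ∈ N1 F v, a ∈ i.1

/-- active colours at `v` -/
noncomputable def act (F : Finset (Sym2 V)) (w : Sym2 V → C → ℝ) (v : V) : Finset C :=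
  (nb F v).biUnion fun u => Finset.univ.filter fun c => w s(v, u) c ≠ 0

/-- bad event at `v` -/
def Bad (F : Finset (Sym2 V)) (w : Sym2 V → C → ℝ) (θ ε T : ℝ) (v : V) (ω : Sym2 V × C → Bool) : Prop :=
  (∃ e ∈ star F v, fe F w θ ω e < 1 - ε) ∨ ∃ c ∈ act F w v, T < Z F w θ ω v c

lemma tch_SV {F : Finset (Sym2 V)} {v u : V} (hu : s(v, u) ∈ F) {f : Sym2 V}
    (hf : f ∈ tch F s(v, u)) (c : C) : (f, c) ∈ SV (C := C) F v := by
  rw [tch, Finset.mem_filter] at hf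
  obtain ⟨hfF, a, ha, haf⟩ := hf
  simp only [SV, Finset.mem_filter, Finset.mem_univ, true_and]
  refine ⟨hfF, a, ?_, haf⟩
  rw [mem_N1]
  rcases Sym2.mem_iff.mp ha with rfl | rfl
  · exact Or.inl rfl
  · exact Or.inr hu

variable {F : Finset (Sym2 V)} {w : Sym2 V → C → ℝ} {θ R B D : ℝ}

lemma Par.Bad_dep (h : Par F w θ R B D) (ε T : ℝ) (v : V) : Dep (SV (C := C) F v) (Bad F w θ ε T v) := by
  intro ω ω' hω
  have hfe : ∀ e ∈ star F v, fe F w θ ω e = fe F w θ ω' e := by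
    intro e he
    rw [star_eq, Finset.mem_image] at he
    obtain ⟨u, hu, rfl⟩ := he
    have hu' : s(v, u) ∈ F := (Finset.mem_filter.mp hu).2
    unfold fe
    refine Finset.sum_congr rfl fun c _ => ?_
    rw [h.YE_congr (ω' := ω') fun f hf => hω _ (tch_SV hu' hf c)]
  have hZ : ∀ c, Z F w θ ω v c = Z F w θ ω' v c := by
    intro c
    unfold Z
    refine Finset.sum_congr rfl fun u hu => ?_
    have hu' : s(v, u) ∈ F := (Finset.mem_filter.mp hu).2
    have h1 : Y F ω u c = Y F ω' u c := by
      refine h.Y_congr fun f hf => hω _ (tch_SV hu' ?_ c)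
      rw [tch_mk]; exact Finset.mem_union_right _ hf
    have h2 : X F ω s(v, u) c = X F ω' s(v, u) c := by
      unfold X
      simp only [eq_iff_iff]
      refine forall₂_congr fun c' _ => ?_
      rw [h.M_congr (h.self_tch hu') (ω' := ω') fun f hf => hω _ (tch_SV hu' hf c')]
    unfold bb
    rw [h1, h2]
  unfold Bad
  simp only [eq_iff_iff]
  refine or_congr (exists_congr fun e => and_congr_right fun he => ?_) ?_
  · rw [hfe e he]
  · simp only [hZ]

lemma Par.card_N1 (h : Par F w θ R B D) (v : V) : ((N1 F v).card : ℝ) ≤ D + 1 := by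
  have h1 : (N1 F v).card ≤ (nb F v).card + 1 := Finset.card_insert_le _ _
  have h2 := h.st.deg v
  have h3 : ((N1 F v).card : ℝ) ≤ (nb F v).card + 1 := by exact_mod_cast h1
  linarith

lemma card_biU {α β : Type} [DecidableEq β] (s : Finset α) (t : α → Finset β) (b : ℝ)
    (hb : ∀ a ∈ s, ((t a).card : ℝ) ≤ b) : ((s.biUnion t).card : ℝ) ≤ s.card * b := by
  calc ((s.biUnion t).card : ℝ) ≤ ∑ a ∈ s, ((t a).card : ℝ) := by
        exact_mod_cast Finset.card_biUnion_le
    _ ≤ ∑ a ∈ s, b := Finset.sum_le_sum hb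
    _ = _ := by rw [Finset.sum_const, nsmul_eq_mul]

lemma Par.card_dep (h : Par F w θ R B D) (v : V) :
    ((Finset.univ.filter fun k => ¬ Disjoint (SV (C := C) F v) (SV F k)).card : ℝ) ≤ (D + 1) ^ 3 := by
  have hD := h.D0
  have hsub : (Finset.univ.filter fun k => ¬ Disjoint (SV (C := C) F v) (SV F k)) ⊆
      (N1 F v).biUnion fun a => (N1 F a).biUnion fun b => N1 F b := by
    intro k hk
    rw [Finset.mem_filter, Finset.not_disjoint_iff] at hk
    obtain ⟨-, ⟨f, c⟩, h1, h2⟩ := hk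
    simp only [SV, Finset.mem_filter, Finset.mem_univ, true_and] at h1 h2
    obtain ⟨hf, a, ha, haf⟩ := h1
    obtain ⟨-, b, hb, hbf⟩ := h2
    simp only [Finset.mem_biUnion]
    refine ⟨a, ha, b, ?_, ?_⟩
    · rw [mem_N1]
      by_cases hab : b = a
      · exact Or.inl hab
      · right
        rwa [← (Sym2.mem_and_mem_iff (Ne.symm hab)).mp ⟨haf, hbf⟩]
    · rw [mem_N1] at hb ⊢
      rcases hb with rfl | hb
      · exact Or.inl rfl
      · right; rwa [Sym2.eq_swap]
  have h1 : ∀ a ∈ N1 F v, ((((N1 F a).biUnion fun b => N1 F b).card : ℕ) : ℝ) ≤ (D + 1) * (D + 1) := by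
    intro a _
    refine le_trans (card_biU _ _ (D + 1) fun b _ => h.card_N1 b) ?_
    exact mul_le_mul_of_nonneg_right (h.card_N1 a) (by linarith)
  refine le_trans (Nat.cast_le.mpr (Finset.card_le_card hsub)) ?_
  refine le_trans (card_biU _ _ _ h1) ?_
  refine le_trans (mul_le_mul_of_nonneg_right (h.card_N1 v) (by positivity)) (le_of_eq (by ring))

lemma Par.card_act (h : Par F w θ R B D) (v : V) : ((act F w v).card : ℝ) ≤ B * D ^ 2 := by
  have hD := h.D0
  have hB := h.B1
  refine le_trans (card_biU _ _ (B * D) fun u hu => h.st.supp _ (Finset.mem_filter.mp hu).2) ?_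
  refine le_trans (mul_le_mul_of_nonneg_right (h.st.deg v) (by positivity)) (le_of_eq (by ring))

lemma Par.exists_good (h : Par F w θ R B D) (ε η : ℝ) (hε : 0 ≤ ε) (hη : 0 ≤ η) (h4 : 4 * η * B ≤ 1)
    (h6 : 6 * η * B ^ 3 ≤ ε / 2)
    (hbig : (D + 1) ^ 3 * ((D + B * D ^ 2) * Real.exp (-(η * ε / 2 * D))) ≤ 1 / 4) :
    ∃ ω : Sym2 V × C → Bool, (∀ e c, ω (e, c) = true → w e c ≠ 0) ∧ (∀ e ∈ F, 1 - ε ≤ fe F w θ ω e) ∧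
      ∀ v c, Z F w θ ω v c ≤ Real.exp (-(θ * (1 - 2 * θ) * (1 - B / D))) * R + ε := by
  have hD := h.D0
  have hB := h.B1
  set T := Real.exp (-(θ * (1 - 2 * θ) * (1 - B / D))) * R + ε with hT
  have hT0 : 0 ≤ T := add_nonneg (mul_nonneg (Real.exp_pos _).le h.R0) hε
  set P := Real.exp (-(η * ε / 2 * D)) with hP
  have hP0 : 0 < P := Real.exp_pos _
  have hexp : Real.exp (- (η * D) * ε + (η * D) ^ 2 * (6 * B ^ 3 / D)) ≤ P := by
    apply Real.exp_le_exp.mpr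
    have e1 : (η * D) ^ 2 * (6 * B ^ 3 / D) = (η * D) * (6 * η * B ^ 3) := by field_simp
    rw [e1]
    have := mul_le_mul_of_nonneg_left h6 (mul_nonneg hη hD.le)
    linarith
  have hlB : η * D * (4 * B / D) ≤ 1 := by
    have : η * D * (4 * B / D) = 4 * η * B := by field_simp
    rw [this]; exact h4
  have hbad : ∀ v, Ex (ber (pr w θ)) (fun ω => ind (Bad F w θ ε T v ω)) ≤ (D + B * D ^ 2) * P := by
    intro v
    calc Ex (ber (pr w θ)) (fun ω => ind (Bad F w θ ε T v ω))
        ≤ Ex (ber (pr w θ)) (fun ω => (∑ e ∈ star F v, ind (fe F w θ ω e < 1 - ε))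
            + ∑ c ∈ act F w v, ind (T < Z F w θ ω v c)) := by
          refine Ex_mono h.prob fun ω => ?_
          refine le_trans (ind_or_le _ _) (add_le_add ?_ ?_)
          · exact ind_ex_le _ (fun e => fe F w θ ω e < 1 - ε)
          · exact ind_ex_le _ (fun c => T < Z F w θ ω v c)
      _ = (∑ e ∈ star F v, Ex (ber (pr w θ)) fun ω => ind (fe F w θ ω e < 1 - ε))
            + ∑ c ∈ act F w v, Ex (ber (pr w θ)) fun ω => ind (T < Z F w θ ω v c) := by
          rw [Ex_add, Ex_sum, Ex_sum]
      _ ≤ (∑ e ∈ star F v, P) + ∑ c ∈ act F w v, P := by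
          refine add_le_add (Finset.sum_le_sum fun e he => ?_) (Finset.sum_le_sum fun c _ => ?_)
          · exact le_trans (h.tail_A e (Finset.mem_filter.mp he).1 ε (η * D) (by positivity) hlB) hexp
          · exact le_trans (h.tail_B v c ε (η * D) (by positivity) hlB) hexp
      _ ≤ (D + B * D ^ 2) * P := by
          rw [Finset.sum_const, Finset.sum_const, nsmul_eq_mul, nsmul_eq_mul, ← add_mul, card_star]
          exact mul_le_mul_of_nonneg_right (add_le_add (h.st.deg v) (h.card_act v)) hP0.le
  have hpos : 0 ≤ (D + B * D ^ 2) * P := by positivity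
  obtain ⟨ω, hω0, hω⟩ := lll h.prob (Bad F w θ ε T) (SV F) (h.Bad_dep ε T) (by
      intro v
      refine le_trans (Finset.sum_le_sum fun k _ => hbad k) ?_
      rw [Finset.sum_const, nsmul_eq_mul]
      exact le_trans (mul_le_mul_of_nonneg_right (h.card_dep v) hpos) hbig) (by
      intro v
      refine le_trans (hbad v) (le_trans ?_ hbig)
      have : 1 ≤ (D + 1) ^ 3 := one_le_pow₀ (by linarith)
      nlinarith)
  refine ⟨ω, ?_, ?_, ?_⟩
  · intro e c hec hw
    apply hω0
    unfold Wt
    apply Finset.prod_eq_zero (Finset.mem_univ (e, c))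
    simp [ber, hec, pr, hw]
  · intro e he
    by_contra hc
    obtain ⟨v, hv⟩ : ∃ v, v ∈ e := by
      induction e using Sym2.ind with
      | _ a b => exact ⟨a, Sym2.mem_mk_left _ _⟩
    exact hω v (Or.inl ⟨e, Finset.mem_filter.mpr ⟨he, hv⟩, not_le.mp hc⟩)
  · intro v c
    by_cases hc : c ∈ act F w v
    · by_contra hh
      exact hω v (Or.inr ⟨c, hc, not_le.mp hh⟩)
    · refine le_trans (le_of_eq ?_) hT0
      unfold Z
      refine Finset.sum_eq_zero fun u hu => ?_
      have : w s(v, u) c = 0 := by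
        by_contra hw
        exact hc (Finset.mem_biUnion.mpr ⟨u, hu, by simp [hw]⟩)
      simp [bb, this]

/-- updated weights -/
noncomputable def wn (F F' : Finset (Sym2 V)) (w : Sym2 V → C → ℝ) (θ ε : ℝ) (ω : Sym2 V × C → Bool)
    (e : Sym2 V) (c : C) : ℝ :=
  if e ∈ F' then w e c * ind (YE F ω e c) / KE F w θ e c / (1 - ε) else 0

open Classical in
/-- uncoloured edges -/
noncomputable def Fn (F : Finset (Sym2 V)) (ω : Sym2 V × C → Bool) : Finset (Sym2 V) :=
  F.filter fun e => ∀ c, ¬ M F ω e c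

lemma mem_Fn {F : Finset (Sym2 V)} {ω : Sym2 V × C → Bool} {e : Sym2 V} :
    e ∈ Fn F ω ↔ e ∈ F ∧ ∀ c, ¬ M F ω e c := by
  classical
  simp [Fn]

lemma Par.wn_bd (h : Par F w θ R B D) (ε : ℝ) (hε1 : ε ≤ 1 / 2) (F' : Finset (Sym2 V))
    (ω : Sym2 V × C → Bool) (e : Sym2 V) (c : C) :
    0 ≤ wn F F' w θ ε ω e c ∧ wn F F' w θ ε ω e c ≤ 4 * w e c := by
  have h1 := h.KE_ge e c
  have h2 := h.st.nonneg e c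
  have h3 := ind_nonneg (YE F ω e c)
  have h4 := ind_le_one (YE F ω e c)
  unfold wn
  split_ifs
  · have h5 : 0 < 1 - ε := by linarith
    constructor
    · positivity
    · rw [div_le_iff₀ h5, div_le_iff₀ (by linarith)]
      have : 1 ≤ 4 * (1 - ε) * KE F w θ e c := by nlinarith
      calc w e c * ind (YE F ω e c) ≤ w e c * 1 := mul_le_mul_of_nonneg_left h4 h2
        _ ≤ w e c * (4 * (1 - ε) * KE F w θ e c) := mul_le_mul_of_nonneg_left this h2
        _ = _ := by ring
  · exact ⟨le_rfl, by linarith⟩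

lemma Par.round_st (h : Par F w θ R B D) (ε T R' : ℝ) (hε1 : ε ≤ 1 / 2) (hT0 : 0 ≤ T)
    (ω : Sym2 V × C → Bool) (hfe : ∀ e ∈ F, 1 - ε ≤ fe F w θ ω e)
    (hZ : ∀ v c, Z F w θ ω v c ≤ T) (hR' : T ≤ R' * ((1 - θ * R) * (1 - ε))) :
    St (Fn F ω) (wn F (Fn F ω) w θ ε ω) R' (4 * B) D := by
  have hε : 0 < 1 - ε := by linarith
  have hθR : 0 < 1 - θ * R := by
    have := h.θ0; have := h.θ1; have := h.R0; have := h.R1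
    nlinarith
  have hR0 : 0 ≤ R' := by
    by_contra hc
    have : R' * ((1 - θ * R) * (1 - ε)) < 0 := mul_neg_of_neg_of_pos (not_le.mp hc) (mul_pos hθR hε)
    linarith
  have hsubF : Fn F ω ⊆ F := fun e he => (mem_Fn.mp he).1
  have hnb : ∀ v, nb (Fn F ω) v ⊆ nb F v := fun v u hu => by
    simp only [nb, Finset.mem_filter, Finset.mem_univ, true_and] at hu ⊢
    exact hsubF hu
  refine ⟨fun e c => (h.wn_bd ε hε1 _ ω e c).1, ?_, ?_, ?_, ?_, ?_⟩
  · intro e c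
    refine le_trans (h.wn_bd ε hε1 _ ω e c).2 ?_
    rw [mul_div_assoc]
    linarith [h.st.le e c]
  · intro e he
    have : ∑ c, wn F (Fn F ω) w θ ε ω e c = fe F w θ ω e / (1 - ε) := by
      unfold fe wn
      simp only [he, if_true]
      rw [Finset.sum_div]
    rw [this, le_div_iff₀ hε, one_mul]
    exact hfe e (hsubF he)
  · intro e he
    have h1 := h.st.supp e (hsubF he)
    have hsub : (Finset.univ.filter fun c => wn F (Fn F ω) w θ ε ω e c ≠ 0) ⊆
        Finset.univ.filter fun c => w e c ≠ 0 := by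
      intro c hc
      simp only [Finset.mem_filter, Finset.mem_univ, true_and] at hc ⊢
      intro hw
      apply hc
      simp [wn, hw]
    have h2 : ((Finset.univ.filter fun c => wn F (Fn F ω) w θ ε ω e c ≠ 0).card : ℝ) ≤ _ :=
      Nat.cast_le.mpr (Finset.card_le_card hsub)
    have := h.D0
    have := h.B1
    have : 0 ≤ B * D := by positivity
    linarith
  · intro v
    refine le_trans ?_ (h.st.deg v)
    exact Nat.cast_le.mpr (Finset.card_le_card (hnb v))
  · intro v c
    by_cases hY : Y F ω v c
    · have hk := h.kp_ge v c
      have hkp : 0 < kp F w θ v c := by linarith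
      have hbb0 : ∀ u, 0 ≤ bb F w θ v c u ω := by
        intro u
        have := h.kp_ge' u c
        exact div_nonneg (mul_nonneg (h.st.nonneg _ _) (ind_nonneg _)) (by linarith)
      have hle : ∑ u ∈ nb (Fn F ω) v, wn F (Fn F ω) w θ ε ω s(v, u) c
          ≤ Z F w θ ω v c / (kp F w θ v c * (1 - ε)) := by
        unfold Z
        rw [Finset.sum_div]
        calc ∑ u ∈ nb (Fn F ω) v, wn F (Fn F ω) w θ ε ω s(v, u) c
            ≤ ∑ u ∈ nb (Fn F ω) v, bb F w θ v c u ω * ind (X F ω s(v, u) c) / (kp F w θ v c * (1 - ε)) := by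
              refine Finset.sum_le_sum fun u hu => ?_
              have hu' : s(v, u) ∈ Fn F ω := (Finset.mem_filter.mp hu).2
              have hX : X F ω s(v, u) c := fun c' _ => (mem_Fn.mp hu').2 c'
              rw [ind_true hX, mul_one]
              unfold wn
              rw [if_pos hu']
              have hi : ind (YE F ω s(v, u) c) ≤ ind (Y F ω u c) := by
                apply ind_mono
                intro hy f hf
                apply hy
                rw [tch_mk]; exact Finset.mem_union_right _ hf
              have hku := h.kp_ge' u c
              simp only [KE, Sym2.lift_mk, bb]
              rw [div_div, div_div]
              have e1 : kp F w θ v c * kp F w θ u c * (1 - ε) = kp F w θ u c * (kp F w θ v c * (1 - ε)) := by ring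
              rw [e1]
              apply div_le_div_of_nonneg_right
              · exact mul_le_mul_of_nonneg_left hi (h.st.nonneg _ _)
              · positivity
          _ ≤ _ := by
              refine Finset.sum_le_sum_of_subset_of_nonneg (hnb v) fun u _ _ => ?_
              exact div_nonneg (mul_nonneg (hbb0 u) (ind_nonneg _)) (by positivity)
      refine le_trans hle ?_
      rw [div_le_iff₀ (by positivity)]
      refine le_trans (hZ v c) (le_trans hR' ?_)
      apply mul_le_mul_of_nonneg_left _ hR0
      exact mul_le_mul_of_nonneg_right hk hε.le
    · refine le_trans (le_of_eq ?_) hR0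
      refine Finset.sum_eq_zero fun u hu => ?_
      have : ¬ YE F ω s(v, u) c := by
        intro hy
        apply hY
        intro f hf
        apply hy
        rw [tch_mk]; exact Finset.mem_union_left _ hf
      simp [wn, ind_false this]

lemma Par.round_col (h : Par F w θ R B D) (ε : ℝ) (hε1 : ε ≤ 1 / 2)
    (ω : Sym2 V × C → Bool) (hω : ∀ e c, ω (e, c) = true → w e c ≠ 0)
    (hcol : Col (Fn F ω) (wn F (Fn F ω) w θ ε ω)) : Col F w := by
  classical
  obtain ⟨γ, hγ1, hγ2⟩ := hcol
  set γ' : Sym2 V → C := fun e => if hM : ∃ c, M F ω e c then hM.choose else γ e with hγ'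
  have hA : ∀ e, (∃ c, M F ω e c) → M F ω e (γ' e) := by
    intro e hM
    simp only [hγ', dif_pos hM]
    exact hM.choose_spec
  have hB : ∀ e ∈ F, (¬ ∃ c, M F ω e c) → e ∈ Fn F ω ∧ γ' e = γ e := by
    intro e he hM
    refine ⟨mem_Fn.mpr ⟨he, not_exists.mp hM⟩, ?_⟩
    simp only [hγ', dif_neg hM]
  have hC : ∀ e ∈ Fn F ω, YE F ω e (γ e) := by
    intro e he
    by_contra hy
    have := hγ1 e he
    simp [wn, ind_false hy] at this
  refine ⟨γ', ?_, ?_⟩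
  · intro e he
    by_cases hM : ∃ c, M F ω e c
    · exact lt_of_le_of_ne (h.st.nonneg _ _) (hω _ _ (hA e hM).1).symm
    · obtain ⟨h1, h2⟩ := hB e he hM
      rw [h2]
      have h3 := (h.wn_bd ε hε1 (Fn F ω) ω e (γ e)).2
      have := hγ1 e h1
      linarith
  · intro e he f hf hef hv heq
    have hv' : ∃ v, v ∈ f ∧ v ∈ e := by obtain ⟨v, a, b⟩ := hv; exact ⟨v, b, a⟩
    have hfe : f ∈ tch F e := Finset.mem_filter.mpr ⟨hf, hv⟩
    have hef' : e ∈ tch F f := Finset.mem_filter.mpr ⟨he, hv'⟩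
    by_cases hMe : ∃ c, M F ω e c
    · have h1 := hA e hMe
      by_cases hMf : ∃ c, M F ω f c
      · have h2 := hA f hMf
        have h3 := h1.2 f (Finset.mem_erase.mpr ⟨hef.symm, hfe⟩)
        rw [heq, h2.1] at h3
        exact absurd h3 (by simp)
      · obtain ⟨h2, h3⟩ := hB f hf hMf
        have h4 := hC f h2 e hef'
        rw [← h3, ← heq, h1.1] at h4
        exact absurd h4 (by simp)
    · obtain ⟨h2, h3⟩ := hB e he hMe
      by_cases hMf : ∃ c, M F ω f c
      · have h1 := hA f hMf
        have h4 := hC e h2 f hfe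
        rw [← h3, heq, h1.1] at h4
        exact absurd h4 (by simp)
      · obtain ⟨h4, h5⟩ := hB f hf hMf
        rw [h3, h5] at heq
        exact hγ2 e h2 f h4 hef hv heq

end rnd
end Nib

namespace Nib

lemma asym (a B : ℝ) (ha : 0 < a) (hB : 1 ≤ B) : ∃ D₀ : ℝ, ∀ D, D₀ ≤ D →
    (D + 1) ^ 3 * ((D + B * D ^ 2) * Real.exp (-(a * D))) ≤ 1 / 4 := by
  have h1 := Real.tendsto_pow_mul_exp_neg_atTop_nhds_zero 5
  have h2 : Filter.Tendsto (fun D : ℝ => a * D) Filter.atTop Filter.atTop :=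
    Filter.tendsto_id.const_mul_atTop ha
  have h3 := h1.comp h2
  have hc : 0 < a ^ 5 / (64 * B) := by positivity
  have h4 := h3.eventually (gt_mem_nhds hc)
  obtain ⟨D₁, hD₁⟩ := Filter.eventually_atTop.mp h4
  refine ⟨max D₁ 1, fun D hD => ?_⟩
  have hD1 : 1 ≤ D := le_trans (le_max_right _ _) hD
  have h5 := hD₁ D (le_trans (le_max_left _ _) hD)
  simp only [Function.comp] at h5
  have he : 0 < Real.exp (-(a * D)) := Real.exp_pos _
  have h6 : D ^ 5 * Real.exp (-(a * D)) < 1 / (64 * B) := by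
    have e1 : (a * D) ^ 5 * Real.exp (-(a * D)) = a ^ 5 * (D ^ 5 * Real.exp (-(a * D))) := by ring
    have e2 : a ^ 5 / (64 * B) = a ^ 5 * (1 / (64 * B)) := by ring
    rw [e1, e2] at h5
    exact lt_of_mul_lt_mul_left h5 (by positivity)
  have h7 : (D + 1) ^ 3 * (D + B * D ^ 2) ≤ 16 * B * D ^ 5 := by
    have i1 : (D + 1) ^ 3 ≤ (2 * D) ^ 3 := by gcongr; linarith
    have i2 : D + B * D ^ 2 ≤ 2 * B * D ^ 2 := by
      have : D ≤ B * D ^ 2 := by nlinarith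
      linarith
    calc _ ≤ (2 * D) ^ 3 * (2 * B * D ^ 2) := by gcongr
      _ = _ := by ring
  calc _ = ((D + 1) ^ 3 * (D + B * D ^ 2)) * Real.exp (-(a * D)) := by ring
    _ ≤ (16 * B * D ^ 5) * Real.exp (-(a * D)) := by gcongr
    _ = 16 * B * (D ^ 5 * Real.exp (-(a * D))) := by ring
    _ ≤ 16 * B * (1 / (64 * B)) := by gcongr
    _ = 1 / 4 := by field_simp; norm_num

/-- colourability from load `r` -/
def Good (r : ℝ) : Prop := ∀ B : ℝ, 1 ≤ B → ∃ D₀ : ℝ, ∀ D : ℝ, D₀ ≤ D →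
  ∀ (V C : Type) [Fintype V] [DecidableEq V] [Fintype C] [DecidableEq C] [Nonempty C]
    (F : Finset (Sym2 V)) (w : Sym2 V → C → ℝ), St F w r B D → Col F w

lemma arith {r δ t : ℝ} (hδ : 0 < δ) (hδ1 : δ ≤ 1) (hr : 1 / 32 ≤ r) (hr1 : r ≤ 1 - δ)
    (ht0 : 0 ≤ t) (ht : t ≤ δ / 16) :
    Real.exp (-(δ / 16 * (1 - 2 * (δ / 16)) * (1 - t))) * r + δ / 16 * δ / 128
      ≤ (r - δ / 16 * δ / 128) * ((1 - δ / 16 * r) * (1 - δ / 16 * δ / 128)) := by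
  obtain ⟨θ, hθ⟩ : ∃ θ, θ = δ / 16 := ⟨_, rfl⟩
  have hδθ : δ = 16 * θ := by linarith
  rw [← hθ] at ht ⊢
  have hθ0 : 0 < θ := by linarith
  have hθ1 : θ ≤ 1 / 16 := by linarith
  obtain ⟨κ, hκ⟩ : ∃ κ, κ = θ * δ / 128 := ⟨_, rfl⟩
  rw [← hκ]
  have hκ' : κ = θ ^ 2 / 8 := by rw [hκ, hδθ]; ring
  obtain ⟨x, hx⟩ : ∃ x, x = θ * (1 - 2 * θ) * (1 - t) := ⟨_, rfl⟩
  rw [← hx]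
  have hxl : θ - 3 * θ ^ 2 ≤ x := by
    rw [hx]
    nlinarith [mul_nonneg hθ0.le (sub_nonneg.mpr ht), mul_nonneg (mul_nonneg hθ0.le hθ0.le) ht0]
  have hxu : x ≤ θ := by
    have h1 : θ * (1 - 2 * θ) ≤ θ := by nlinarith
    have h2 : 0 ≤ θ * (1 - 2 * θ) := by nlinarith
    rw [hx]
    nlinarith [mul_nonneg h2 ht0]
  have hx0 : 0 ≤ x := by nlinarith
  have hq : Real.exp (-x) ≤ 1 - θ + 4 * θ ^ 2 := by
    have := exp_le_quad (d := -x) (by rw [abs_neg, abs_of_nonneg hx0]; linarith)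
    nlinarith
  have hκ0 : 0 ≤ κ := by rw [hκ']; positivity
  have hr0 : 0 ≤ r := by linarith
  have h1 : Real.exp (-x) * r ≤ (1 - θ + 4 * θ ^ 2) * r := mul_le_mul_of_nonneg_right hq hr0
  have hu0 : 0 ≤ 1 - θ * r := by nlinarith
  have hu1 : 1 - θ * r ≤ 1 := by nlinarith
  have hκ1 : κ ≤ 1 := by rw [hκ']; nlinarith
  have h2 : r * (1 - θ * r) - 2 * κ ≤ (r - κ) * ((1 - θ * r) * (1 - κ)) := by
    have a1 : r * (1 - θ * r) * κ ≤ κ := by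
      have : r * (1 - θ * r) ≤ 1 := by nlinarith
      nlinarith
    have a2 : κ * ((1 - θ * r) * (1 - κ)) ≤ κ := by
      have : (1 - θ * r) * (1 - κ) ≤ 1 := by nlinarith
      nlinarith
    nlinarith
  have h3 : θ * (r * (1 - r)) ≥ θ * (16 * θ * r) := by
    apply mul_le_mul_of_nonneg_left _ hθ0.le
    nlinarith
  have h4 : θ ^ 2 * r ≥ θ ^ 2 * (1 / 32) := mul_le_mul_of_nonneg_left hr (by positivity)
  nlinarith

lemma step {r δ : ℝ} (hδ : 0 < δ) (hδ1 : δ ≤ 1) (hr : 1 / 32 ≤ r) (hr1 : r ≤ 1 - δ)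
    (hg : Good (r - δ / 16 * δ / 128)) : Good r := by
  intro B hB
  obtain ⟨D₁, hD₁⟩ := hg (4 * B) (by linarith)
  set θ := δ / 16 with hθ
  set ε := θ * δ / 128 with hε
  have hθ0 : 0 < θ := by positivity
  have hε0 : 0 < ε := by positivity
  have hε1 : ε ≤ 1 / 2 := by
    have : θ ≤ 1 / 16 := by linarith
    have : θ * δ ≤ 1 := by nlinarith
    linarith
  set η := ε / (12 * B ^ 3) with hη
  have hη0 : 0 < η := by positivity
  have h6 : 6 * η * B ^ 3 = ε / 2 := by rw [hη]; field_simp; norm_num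
  have h4 : 4 * η * B ≤ 1 := by
    have : η * B ≤ η * B ^ 3 := by
      apply mul_le_mul_of_nonneg_left _ hη0.le
      nlinarith [one_le_pow₀ hB (n := 2)]
    linarith
  obtain ⟨D₂, hD₂⟩ := asym (η * ε / 2) B (by positivity) hB
  refine ⟨max (max D₁ D₂) (max B (B / θ)), ?_⟩
  intro D hD V C _ _ _ _ _ F w hst
  have g1 : D₁ ≤ D := le_trans (le_trans (le_max_left _ _) (le_max_left _ _)) hD
  have g2 : D₂ ≤ D := le_trans (le_trans (le_max_right _ _) (le_max_left _ _)) hD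
  have g3 : B ≤ D := le_trans (le_trans (le_max_left _ _) (le_max_right _ _)) hD
  have g4 : B / θ ≤ D := le_trans (le_trans (le_max_right _ _) (le_max_right _ _)) hD
  have hDp : 0 < D := by linarith
  have hP : Par F w θ r B D := ⟨hst, hθ0, by linarith, by linarith, by linarith, hB, g3⟩
  have ht : B / D ≤ θ := by
    rw [div_le_iff₀ hDp]
    rwa [div_le_iff₀ hθ0, mul_comm] at g4
  obtain ⟨ω, hω1, hω2, hω3⟩ := hP.exists_good ε η hε0.le hη0.le h4 h6.le (hD₂ D g2)
  refine hP.round_col ε hε1 ω hω1 ?_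
  refine hD₁ D g1 V C _ _ ?_
  refine hP.round_st ε _ _ hε1 ?_ ω hω2 hω3 ?_
  · exact add_nonneg (mul_nonneg (Real.exp_pos _).le hP.R0) hε0.le
  · exact arith hδ hδ1 hr hr1 (by positivity) ht

lemma good_small {r : ℝ} (hr : r ≤ 1 / 32) : Good r := by
  intro B _
  refine ⟨0, ?_⟩
  intro D _ V C _ _ _ _ _ F w hst
  exact base hst hr

lemma good_ind {δ : ℝ} (hδ : 0 < δ) (hδ1 : δ ≤ 1) (n : ℕ) :
    ∀ r, r ≤ 1 - δ → r ≤ 1 / 32 + n * (δ / 16 * δ / 128) → Good r := by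
  have hk : 0 < δ / 16 * δ / 128 := by positivity
  induction n with
  | zero =>
    intro r _ h
    exact good_small (by simpa using h)
  | succ n ih =>
    intro r h1 h2
    by_cases hr : r ≤ 1 / 32
    · exact good_small hr
    · refine step hδ hδ1 (not_le.mp hr).le h1 (ih _ (by linarith) ?_)
      push_cast at h2
      linarith

lemma good {δ : ℝ} (hδ : 0 < δ) (hδ1 : δ ≤ 1) : Good (1 - δ) := by
  have hk : 0 < δ / 16 * δ / 128 := by positivity
  obtain ⟨n, hn⟩ := exists_nat_ge (1 / (δ / 16 * δ / 128))
  rw [div_le_iff₀ hk] at hn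
  exact good_ind hδ hδ1 n _ le_rfl (by linarith)

end Nib

namespace Nib

lemma polytope_vertex {V : Type} [Fintype V] [DecidableEq V] (G : SimpleGraph V) [DecidableRel G.Adj]
    (x : G.edgeFinset → ℝ) (hx : x ∈ matchingPolytope G) (v : V) :
    ∑ e : G.edgeFinset, (if v ∈ (e : Sym2 V) then (1 : ℝ) else 0) * x e ≤ 1 := by
  have hconv : Convex ℝ {x : G.edgeFinset → ℝ |
      ∑ e : G.edgeFinset, (if v ∈ (e : Sym2 V) then (1 : ℝ) else 0) * x e ≤ 1} := by
    apply convex_halfSpace_le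
    constructor
    · intro x y
      simp only [Pi.add_apply, mul_add, Finset.sum_add_distrib]
    · intro c x
      simp only [Pi.smul_apply, smul_eq_mul, Finset.mul_sum]
      exact Finset.sum_congr rfl fun e _ => by ring
  refine convexHull_min ?_ hconv hx
  rintro x ⟨Mt, ⟨-, hM⟩, rfl⟩
  simp only [Set.mem_setOf_eq]
  have e1 : ∀ e : G.edgeFinset, (if v ∈ (e : Sym2 V) then (1 : ℝ) else 0) *
      (if (e : Sym2 V) ∈ Mt then (1 : ℝ) else 0) = if (v ∈ (e : Sym2 V) ∧ (e : Sym2 V) ∈ Mt) then 1 else 0 := by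
    intro e
    by_cases h1 : v ∈ (e : Sym2 V) <;> by_cases h2 : (e : Sym2 V) ∈ Mt <;> simp [h1, h2]
  rw [Finset.sum_congr rfl fun e _ => e1 e, ← Finset.sum_filter, Finset.sum_const, nsmul_eq_mul, mul_one]
  have : (Finset.univ.filter fun e : G.edgeFinset => v ∈ (e : Sym2 V) ∧ (e : Sym2 V) ∈ Mt).card ≤ 1 := by
    rw [Finset.card_le_one]
    intro a ha b hb
    simp only [Finset.mem_filter, Finset.mem_univ, true_and] at ha hb
    by_contra hab
    exact hM a ha.2 b hb.2 (fun h => hab (Subtype.ext h)) v ⟨ha.1, hb.1⟩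
  exact_mod_cast this

lemma vertex_bound {V : Type} [Fintype V] [DecidableEq V] (G : SimpleGraph V) [DecidableRel G.Adj]
    (g : Sym2 V → ℝ) (s : ℝ) (hs : 0 ≤ s)
    (hx : (fun e : G.edgeFinset => g (e : Sym2 V)) ∈ s • matchingPolytope G) (v : V) :
    ∑ u ∈ nb G.edgeFinset v, g s(v, u) ≤ s := by
  obtain ⟨x, hx, hxg⟩ := hx
  have h1 := polytope_vertex G x hx v
  have h2 : ∑ e : G.edgeFinset, (if v ∈ (e : Sym2 V) then (1 : ℝ) else 0) * g e ≤ s := by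
    have h3 : ∀ e : G.edgeFinset, g e = s * x e := fun e => by
      have := congrFun hxg e
      simpa using this.symm
    have h4 : ∑ e : G.edgeFinset, (if v ∈ (e : Sym2 V) then (1 : ℝ) else 0) * g e
        = s * ∑ e : G.edgeFinset, (if v ∈ (e : Sym2 V) then (1 : ℝ) else 0) * x e := by
      rw [Finset.mul_sum]
      refine Finset.sum_congr rfl fun e _ => ?_
      rw [h3 e]; ring
    rw [h4]
    nlinarith
  rw [Finset.sum_coe_sort G.edgeFinset (fun e => (if v ∈ e then (1 : ℝ) else 0) * g e)] at h2
  rw [← sum_star G.edgeFinset v g]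
  unfold star
  rw [Finset.sum_filter]
  refine le_trans (le_of_eq ?_) h2
  refine Finset.sum_congr rfl fun e _ => ?_
  split_ifs <;> simp

/-- uniform weights on the lists -/
noncomputable def w0 {V : Type} [DecidableEq V] (F : Finset (Sym2 V)) (L : Sym2 V → Finset ℕ) (S : Finset ℕ)
    (e : Sym2 V) (c : S) : ℝ := if e ∈ F ∧ (c : ℕ) ∈ L e then 1 / ((L e).card : ℝ) else 0

lemma w0_st {V : Type} [Fintype V] [DecidableEq V] (F : Finset (Sym2 V)) (L : Sym2 V → Finset ℕ) (S : Finset ℕ)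
    (R B D : ℝ) (hB : 0 ≤ B / D) (hS : ∀ e ∈ F, L e ⊆ S) (hpos : ∀ e ∈ F, (L e).card ≠ 0)
    (h1 : ∀ e ∈ F, 1 / ((L e).card : ℝ) ≤ B / D) (h2 : ∀ e ∈ F, ((L e).card : ℝ) ≤ B * D)
    (hdeg : ∀ v, ((nb F v).card : ℝ) ≤ D)
    (hv : ∀ v, ∑ u ∈ nb F v, 1 / ((L s(v, u)).card : ℝ) ≤ R) : St F (w0 F L S) R B D := by
  refine ⟨?_, ?_, ?_, ?_, hdeg, ?_⟩
  · intro e c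
    unfold w0
    split_ifs
    · positivity
    · exact le_rfl
  · intro e c
    unfold w0
    split_ifs with h
    · exact h1 e h.1
    · exact hB
  · intro e he
    unfold w0
    simp only [he, true_and]
    rw [Finset.sum_coe_sort S (fun c => if c ∈ L e then 1 / ((L e).card : ℝ) else 0), ← Finset.sum_filter,
      Finset.filter_mem_eq_inter, Finset.inter_eq_right.mpr (hS e he), Finset.sum_const, nsmul_eq_mul]
    have : ((L e).card : ℝ) ≠ 0 := Nat.cast_ne_zero.mpr (hpos e he)
    rw [mul_one_div_cancel this]
  · intro e he
    refine le_trans ?_ (h2 e he)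
    rw [Nat.cast_le]
    refine Finset.card_le_card_of_injOn (fun c : S => (c : ℕ)) ?_ (fun a _ b _ hab => Subtype.ext hab)
    intro c hc
    have hc := (Finset.mem_filter.mp (Finset.mem_coe.mp hc)).2
    simp only [w0] at hc
    by_contra hcc
    apply hc
    rw [if_neg]
    exact fun hh => hcc hh.2
  · intro v c
    refine le_trans (Finset.sum_le_sum fun u _ => ?_) (hv v)
    unfold w0
    split_ifs
    · exact le_rfl
    · positivity

end Nib

theorem stmt_3 :
    ∀ δ ν : ℝ, 0 < δ → δ < 1 → 0 < ν →
    ∃ Δ₀ : ℝ, ∀ Δ : ℝ, Δ₀ ≤ Δ →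
    ∀ (V : Type) [Fintype V] [DecidableEq V]
      (G : SimpleGraph V) [DecidableRel G.Adj] (L : Sym2 V → Finset ℕ),
      (G.maxDegree : ℝ) ≤ Δ →
      -- (i)
      (∀ e ∈ G.edgeFinset, ν * Δ ≤ ((L e).card : ℝ)) →
      -- (ii)
      (fun e : G.edgeFinset => (1 : ℝ) / ((L (e : Sym2 V)).card : ℝ)) ∈
        (1 - δ) • matchingPolytope G →
      ∃ γ : Sym2 V → ℕ, IsLEdgeColouring G L γ := by
  intro δ ν hδ hδ1 hν
  have hK : 2 ≤ 2 / δ := by rw [le_div_iff₀ hδ]; linarith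
  set K := 2 / δ with hKd
  have hν' : 0 < 1 / ν := by positivity
  set B := 1 / ν + K + 1 with hB
  obtain ⟨D₀, hD₀⟩ := Nib.good (δ := δ / 2) (by linarith) (by linarith) B (by linarith)
  refine ⟨max D₀ 1, ?_⟩
  intro Δ hΔ V _ _ G _ L hmax hi hii
  have hΔ1 : 1 ≤ Δ := le_trans (le_max_right _ _) hΔ
  have hΔ0 : D₀ ≤ Δ := le_trans (le_max_left _ _) hΔ
  have hKΔ : 0 < K * Δ := by positivity
  set m := ⌈K * Δ⌉₊ with hm
  have hm1 : K * Δ ≤ m := Nat.le_ceil _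
  have hm2 : (m : ℝ) < K * Δ + 1 := Nat.ceil_lt_add_one hKΔ.le
  have hex : ∀ e, ∃ t ⊆ L e, t.card = min (L e).card m := fun e =>
    Finset.exists_subset_card_eq (min_le_left _ _)
  choose L' hL'1 hL'2 using hex
  set F := G.edgeFinset with hF
  have hLpos : ∀ e ∈ F, 0 < ((L e).card : ℝ) := fun e he =>
    lt_of_lt_of_le (by positivity) (hi e he)
  have hmpos : 0 < (m : ℝ) := lt_of_lt_of_le hKΔ hm1
  have hcases : ∀ e, ((L' e).card : ℝ) = (L e).card ∨ ((L' e).card : ℝ) = m := by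
    intro e
    rw [hL'2 e]
    rcases min_choice (L e).card m with h | h
    · left; rw [h]
    · right; rw [h]
  have hL'pos : ∀ e ∈ F, 0 < ((L' e).card : ℝ) := by
    intro e he
    rcases hcases e with h | h
    · rw [h]; exact hLpos e he
    · rw [h]; exact hmpos
  have hinv : ∀ e ∈ F, 1 / ((L' e).card : ℝ) ≤ 1 / ((L e).card : ℝ) + 1 / (K * Δ) := by
    intro e he
    have a1 : 0 < 1 / ((L e).card : ℝ) := one_div_pos.mpr (hLpos e he)
    have a2 : 0 < 1 / (K * Δ) := one_div_pos.mpr hKΔ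
    rcases hcases e with h | h
    · rw [h]; linarith
    · rw [h]
      have := one_div_le_one_div_of_le hKΔ hm1
      linarith
  have hdeg : ∀ v, ((Nib.nb F v).card : ℝ) ≤ Δ := by
    intro v
    refine le_trans ?_ hmax
    rw [Nat.cast_le]
    refine le_trans (le_of_eq ?_) (G.degree_le_maxDegree v)
    rw [← G.card_neighborFinset_eq_degree]
    congr 1
    ext u
    simp [Nib.nb, hF]
  have hst : Nib.St F (Nib.w0 F L' (insert 0 (F.biUnion L))) (1 - δ / 2) B Δ := by
    apply Nib.w0_st
    · positivity
    · intro e he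
      exact (hL'1 e).trans ((Finset.subset_biUnion_of_mem L he).trans (Finset.subset_insert _ _))
    · intro e he h0
      have := hL'pos e he
      rw [h0] at this
      simp at this
    · intro e he
      rw [div_le_div_iff₀ (hL'pos e he) (by linarith)]
      rcases hcases e with h | h
      · rw [h]
        have h1 := mul_le_mul_of_nonneg_left (hi e he) hν'.le
        have h2 : 1 / ν * (ν * Δ) = Δ := by field_simp
        have h3 := hLpos e he
        rw [hB]
        nlinarith
      · rw [h, hB]
        have : 1 * (m : ℝ) ≤ (1 / ν + K + 1) * m := mul_le_mul_of_nonneg_right (by linarith) hmpos.le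
        nlinarith
    · intro e he
      have : ((L' e).card : ℝ) ≤ m := by
        rw [hL'2 e]; exact_mod_cast min_le_right _ _
      rw [hB]
      nlinarith
    · exact hdeg
    · intro v
      have h1 := Nib.vertex_bound G (fun e => 1 / ((L e).card : ℝ)) (1 - δ) (by linarith) hii v
      calc ∑ u ∈ Nib.nb F v, 1 / ((L' s(v, u)).card : ℝ)
          ≤ ∑ u ∈ Nib.nb F v, (1 / ((L s(v, u)).card : ℝ) + 1 / (K * Δ)) :=
            Finset.sum_le_sum fun u hu => hinv _ (Finset.mem_filter.mp hu).2
        _ = ∑ u ∈ Nib.nb F v, 1 / ((L s(v, u)).card : ℝ) + (Nib.nb F v).card * (1 / (K * Δ)) := by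
            rw [Finset.sum_add_distrib, Finset.sum_const, nsmul_eq_mul]
        _ ≤ (1 - δ) + Δ * (1 / (K * Δ)) := by
            refine add_le_add h1 (mul_le_mul_of_nonneg_right (hdeg v) (by positivity))
        _ = 1 - δ / 2 := by
            have : Δ * (1 / (K * Δ)) = δ / 2 := by rw [hKd]; field_simp
            rw [this]; ring
  haveI : Nonempty (↥(insert 0 (F.biUnion L))) := ⟨⟨0, Finset.mem_insert_self _ _⟩⟩
  obtain ⟨γ, hγ1, hγ2⟩ := hD₀ Δ hΔ0 V _ F _ hst
  refine ⟨fun e => (γ e : ℕ), ?_, ?_⟩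
  · intro e he
    have he' : e ∈ F := SimpleGraph.mem_edgeFinset.mpr he
    have := hγ1 e he'
    unfold Nib.w0 at this
    split_ifs at this with hh
    · exact hL'1 e hh.2
    · exact absurd this (lt_irrefl _)
  · intro e he f hf hef hv heq
    exact hγ2 e (SimpleGraph.mem_edgeFinset.mpr he) f (SimpleGraph.mem_edgeFinset.mpr hf) hef hv (Subtype.ext heq)
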